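/- arXiv:1806.07356 — 9 statements merged into one kernel-verified Lean document; each statement's English description precedes it below -/
import Mathlib

section
/- Let p ≥ 1 be a real number, let α ∈ (1/2, 1], let q ∈ ℝ^d and r ≥ 0, and suppose the closed ℓ_p-ball of radius r around q contains at least αW weight, i.e. ∑_{i : ‖a_i − q‖_p ≤ r} w_i ≥ αW. If x ∈ ℝ^d is any coordinatewise weighted median of the points, then ‖x − q‖_p ≤ (α/(α − 1/2))^{1/p} · r. Consequently, the closed ℓ_p-ball of radius ((α/(α − 1/2))^{1/p} + 1) · r around x contains at least αW weight. -/
open Finset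

/-- The ℓ_p norm of a vector in ℝ^d, for a real exponent p. -/
noncomputable def lpNorm {d : ℕ} (p : ℝ) (x : Fin d → ℝ) : ℝ :=
  (∑ j, |x j| ^ p) ^ (1 / p)

/-!
Let `B` be a set of indices of weight `V > W / 2`, where `W` is the total weight. In each
coordinate, the points on the far side of the median `x` as seen from `q` weigh at least `W / 2`,
so those among them in `B` weigh at least `V - W / 2`, and each is at least as far from `q` in that
coordinate as `x` is. Summing over the coordinates gives
`(V - W / 2) ‖x - q‖ ^ p ≤ ∑ i ∈ B, w i ‖a i - q‖ ^ p`. If `B` lies in the ball of radius `r`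
around `q`, the right-hand side is at most `V r ^ p`, and `V / (V - W / 2)` only grows when `V` is
lowered to `α W`. The second claim is Minkowski's inequality for the points of `B`.
-/

section lpNorm

variable {d : ℕ} {p : ℝ}

lemma lpNorm_nonneg (p : ℝ) (y : Fin d → ℝ) : 0 ≤ lpNorm p y := by
  unfold lpNorm
  positivity

lemma lpNorm_rpow (hp : p ≠ 0) (y : Fin d → ℝ) : lpNorm p y ^ p = ∑ j, |y j| ^ p := by
  rw [lpNorm, one_div, Real.rpow_inv_rpow (by positivity) hp]

lemma lpNorm_sub_comm (p : ℝ) (x y : Fin d → ℝ) : lpNorm p (x - y) = lpNorm p (y - x) := by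
  simp only [lpNorm, Pi.sub_apply, abs_sub_comm]

lemma lpNorm_sub_le_lpNorm_sub_add_lpNorm_sub (hp : 1 ≤ p) (x y z : Fin d → ℝ) :
    lpNorm p (x - z) ≤ lpNorm p (x - y) + lpNorm p (y - z) := by
  rw [← sub_add_sub_cancel x y z]
  exact Real.Lp_add_le univ (x - y) (y - z) hp

end lpNorm

lemma antitoneOn_div_sub {𝕜 : Type*} [Field 𝕜] [LinearOrder 𝕜] [IsStrictOrderedRing 𝕜] {c : 𝕜}
    (hc : 0 ≤ c) : AntitoneOn (fun t => t / (t - c)) (Set.Ioi c) := by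
  intro s hs t ht hst
  rw [Set.mem_Ioi] at hs ht
  rw [div_le_div_iff₀ (sub_pos.2 ht) (sub_pos.2 hs)]
  linarith [mul_le_mul_of_nonneg_right hst hc, mul_comm s t]

lemma sum_add_sum_le_sum_univ_add_sum_inter {ι M : Type*} [Fintype ι] [DecidableEq ι]
    [AddCommMonoid M] [PartialOrder M] [IsOrderedAddMonoid M] {w : ι → M} (hw : ∀ i, 0 ≤ w i)
    (s t : Finset ι) :
    ∑ i ∈ s, w i + ∑ i ∈ t, w i ≤ ∑ i, w i + ∑ i ∈ s ∩ t, w i := by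
  rw [← sum_union_inter]
  gcongr
  · exact fun i _ _ => hw i
  · exact subset_univ _

section Median

variable {ι κ : Type*} [Fintype ι] {w : ι → ℝ}

/-- `m` is a weighted median of the reals `u i` with weights `w i`: at least half of the total
weight lies on either side of `m`, where points equal to `m` count for both sides. This is the
condition that `IsCoordMedian` imposes on each coordinate. -/
def IsWeightedMedian (w u : ι → ℝ) (m : ℝ) : Prop :=
  (∑ i, w i) / 2 ≤ ∑ i with u i ≤ m, w i ∧ (∑ i, w i) / 2 ≤ ∑ i with m ≤ u i, w i

/-- `x` is a coordinatewise weighted median of the points `a i` with weights `w i`. -/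
def IsCoordMedian (w : ι → ℝ) (a : ι → κ → ℝ) (x : κ → ℝ) : Prop :=
  ∀ j, IsWeightedMedian w (fun i => a i j) (x j)

lemma IsWeightedMedian.half_le_sum_abs_sub_le {u : ι → ℝ} {m : ℝ}
    (hm : IsWeightedMedian w u m) (hw : ∀ i, 0 ≤ w i) (t : ℝ) :
    (∑ i, w i) / 2 ≤ ∑ i with |m - t| ≤ |u i - t|, w i := by
  rcases le_total t m with htm | hmt
  · refine hm.2.trans <| sum_le_sum_of_subset_of_nonneg
      (monotone_filter_right _ fun i _ hi => ?_) fun i _ _ => hw i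
    exact abs_le_abs_of_nonneg (sub_nonneg.2 htm) (sub_le_sub_right hi t)
  · refine hm.1.trans <| sum_le_sum_of_subset_of_nonneg
      (monotone_filter_right _ fun i _ hi => ?_) fun i _ _ => hw i
    exact abs_le_abs_of_nonpos (sub_nonpos.2 hmt) (sub_le_sub_right hi t)

lemma IsWeightedMedian.mul_abs_sub_rpow_le {u : ι → ℝ} {m : ℝ} (hm : IsWeightedMedian w u m)
    (hw : ∀ i, 0 ≤ w i) {p : ℝ} (hp : 0 ≤ p) (t : ℝ) (B : Finset ι) :
    (∑ i ∈ B, w i - (∑ i, w i) / 2) * |m - t| ^ p ≤ ∑ i ∈ B, w i * |u i - t| ^ p := by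
  classical
  set F : Finset ι := {i | |m - t| ≤ |u i - t|}
  have weight_BF : ∑ i ∈ B, w i - (∑ i, w i) / 2 ≤ ∑ i ∈ B ∩ F, w i := by
    linarith [sum_add_sum_le_sum_univ_add_sum_inter hw B F, hm.half_le_sum_abs_sub_le hw t]
  calc (∑ i ∈ B, w i - (∑ i, w i) / 2) * |m - t| ^ p
      ≤ (∑ i ∈ B ∩ F, w i) * |m - t| ^ p := by gcongr
    _ = ∑ i ∈ B ∩ F, w i * |m - t| ^ p := sum_mul _ _ _
    _ ≤ ∑ i ∈ B ∩ F, w i * |u i - t| ^ p := by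
        refine sum_le_sum fun i hi => mul_le_mul_of_nonneg_left ?_ (hw i)
        exact Real.rpow_le_rpow (abs_nonneg _) (mem_filter.1 (mem_inter.1 hi).2).2 hp
    _ ≤ ∑ i ∈ B, w i * |u i - t| ^ p :=
        sum_le_sum_of_subset_of_nonneg inter_subset_left
          fun i _ _ => mul_nonneg (hw i) (by positivity)

variable {d : ℕ} {a : ι → Fin d → ℝ} {x : Fin d → ℝ}

lemma IsCoordMedian.mul_lpNorm_sub_rpow_le (hx : IsCoordMedian w a x) (hw : ∀ i, 0 ≤ w i)
    {p : ℝ} (hp : 0 < p) (q : Fin d → ℝ) (B : Finset ι) :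
    (∑ i ∈ B, w i - (∑ i, w i) / 2) * lpNorm p (x - q) ^ p ≤
      ∑ i ∈ B, w i * lpNorm p (a i - q) ^ p := by
  simp only [lpNorm_rpow hp.ne', mul_sum, Pi.sub_apply]
  rw [sum_comm]
  exact sum_le_sum fun j _ => (hx j).mul_abs_sub_rpow_le hw hp.le (q j) B

theorem IsCoordMedian.lpNorm_sub_le (hx : IsCoordMedian w a x) (hw : ∀ i, 0 ≤ w i)
    (hW : 0 < ∑ i, w i) {p : ℝ} (hp : 0 < p) {α : ℝ} (hα : 1 / 2 < α) {q : Fin d → ℝ} {r : ℝ}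
    (hr : 0 ≤ r) {B : Finset ι} (hB : α * ∑ i, w i ≤ ∑ i ∈ B, w i)
    (hBr : ∀ i ∈ B, lpNorm p (a i - q) ≤ r) :
    lpNorm p (x - q) ≤ (α / (α - 1 / 2)) ^ (1 / p) * r := by
  set W := ∑ i, w i
  set V := ∑ i ∈ B, w i
  have hαW : W / 2 < α * W := by nlinarith
  have hV : W / 2 < V := hαW.trans_le hB
  have ratio_nonneg : 0 ≤ α / (α - 1 / 2) := div_nonneg (by linarith) (sub_nonneg.2 hα.le)
  have root_nonneg : 0 ≤ (α / (α - 1 / 2)) ^ (1 / p) := Real.rpow_nonneg ratio_nonneg _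
  have moment_le : (V - W / 2) * lpNorm p (x - q) ^ p ≤ V * r ^ p :=
    calc (V - W / 2) * lpNorm p (x - q) ^ p
        ≤ ∑ i ∈ B, w i * lpNorm p (a i - q) ^ p := hx.mul_lpNorm_sub_rpow_le hw hp q B
      _ ≤ ∑ i ∈ B, w i * r ^ p := by
          gcongr with i hi
          · exact hw i
          · exact lpNorm_nonneg p _
          · exact hBr i hi
      _ = V * r ^ p := (sum_mul _ _ _).symm
  have ratio_le : V / (V - W / 2) ≤ α / (α - 1 / 2) :=
    calc V / (V - W / 2) ≤ α * W / (α * W - W / 2) :=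
          antitoneOn_div_sub (half_pos hW).le hαW hV hB
      _ = α / (α - 1 / 2) := by
          rw [show α * W - W / 2 = (α - 1 / 2) * W by ring, mul_div_mul_right _ _ hW.ne']
  rw [← Real.rpow_le_rpow_iff (lpNorm_nonneg p _) (mul_nonneg root_nonneg hr) hp,
    Real.mul_rpow root_nonneg hr, one_div p, Real.rpow_inv_rpow ratio_nonneg hp.ne']
  calc lpNorm p (x - q) ^ p ≤ V * r ^ p / (V - W / 2) := by
        rwa [le_div_iff₀' (sub_pos.2 hV)]
    _ = V / (V - W / 2) * r ^ p := mul_div_right_comm _ _ _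
    _ ≤ α / (α - 1 / 2) * r ^ p := by gcongr

theorem stmt0_general {p : ℝ} (hp : 0 < p) (hw : ∀ i, 0 ≤ w i) (hW : 0 < ∑ i, w i)
    {α : ℝ} (hα : 1 / 2 < α) {q : Fin d → ℝ} {r : ℝ} (hr : 0 ≤ r)
    (hball : α * ∑ i, w i ≤ ∑ i with lpNorm p (a i - q) ≤ r, w i) (hx : IsCoordMedian w a x) :
    lpNorm p (x - q) ≤ (α / (α - 1 / 2)) ^ (1 / p) * r ∧
    (1 ≤ p → α * ∑ i, w i ≤
      ∑ i with lpNorm p (a i - x) ≤ ((α / (α - 1 / 2)) ^ (1 / p) + 1) * r, w i) := by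
  have hxq : lpNorm p (x - q) ≤ (α / (α - 1 / 2)) ^ (1 / p) * r :=
    hx.lpNorm_sub_le hw hW hp hα hr hball fun i hi => (mem_filter.1 hi).2
  refine ⟨hxq, fun hp1 => hball.trans ?_⟩
  refine sum_le_sum_of_subset_of_nonneg (monotone_filter_right _ fun i _ hi => ?_) fun i _ _ => hw i
  calc lpNorm p (a i - x)
      ≤ lpNorm p (a i - q) + lpNorm p (q - x) := lpNorm_sub_le_lpNorm_sub_add_lpNorm_sub hp1 _ _ _
    _ ≤ r + (α / (α - 1 / 2)) ^ (1 / p) * r := add_le_add hi (lpNorm_sub_comm p q x ▸ hxq)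
    _ = ((α / (α - 1 / 2)) ^ (1 / p) + 1) * r := by ring

end Median

theorem stmt0 {n d : ℕ} (hn : 0 < n) (hd : 0 < d) (p : ℝ) (hp : 1 ≤ p)
    (a : Fin n → Fin d → ℝ) (w : Fin n → ℝ) (hw : ∀ i, 0 ≤ w i)
    (W : ℝ) (hW : W = ∑ i, w i) (hWpos : 0 < W)
    (α : ℝ) (hα : 1 / 2 < α) (hα1 : α ≤ 1)
    (q : Fin d → ℝ) (r : ℝ) (hr : 0 ≤ r)
    (hball : α * W ≤
      ∑ i ∈ Finset.univ.filter (fun i => lpNorm p (fun j => a i j - q j) ≤ r), w i)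
    (x : Fin d → ℝ)
    (hmed : ∀ j : Fin d,
      W / 2 ≤ ∑ i ∈ Finset.univ.filter (fun i => a i j ≤ x j), w i ∧
      W / 2 ≤ ∑ i ∈ Finset.univ.filter (fun i => x j ≤ a i j), w i) :
    lpNorm p (fun j => x j - q j) ≤ (α / (α - 1 / 2)) ^ (1 / p) * r ∧
    α * W ≤ ∑ i ∈ Finset.univ.filter
        (fun i => lpNorm p (fun j => a i j - x j) ≤ ((α / (α - 1 / 2)) ^ (1 / p) + 1) * r),
        w i := by
  subst hW
  have h := stmt0_general (zero_lt_one.trans_le hp) hw hWpos hα hr hball hmed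
  exact ⟨h.1, h.2 hp⟩
end

section
/- Suppose n = 2m is even, α ∈ (1/2, 1], q ∈ E, r ≥ 0, and ∑_{i : ‖a_i − q‖ ≤ r} w_i ≥ αW. For each i ∈ {1, …, m} define q_i = a_{2i−1} if w_{2i−1} ≥ w_{2i} and q_i = a_{2i} otherwise, and define v_i = w_{2i−1} + w_{2i} if ‖a_{2i−1} − a_{2i}‖ ≤ 2r and v_i = |w_{2i−1} − w_{2i}| otherwise. Then ∑_{i=1}^m v_i > 0 and ∑_{i : ‖q_i − q‖ ≤ 3r} v_i ≥ α · ∑_{i=1}^m v_i; that is, the closed ball of radius 3r around q contains at least an α fraction of the total v-weight of the points q_1, …, q_m. -/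
open Finset

/-!
Let `W` and `V` be the total weights before and after merging. Merging discards nothing from a near
pair (distance at most `2r`), and twice the smaller weight from a far pair. A far pair has at most
one point in `B(q, r)`, so its weight near `q` drops by at most the smaller of its weights, half of
what it discards; a near pair meeting `B(q, r)` lies in `B(q, 3r)`. Hence the merged weight in
`B(q, 3r)` is at least `αW - (W - V) / 2`, which is at least `αV` since `α ≥ 1/2` and `V ≤ W`. As
the merged weight in `B(q, 3r)` is at most `V`, it also follows that `V ≥ (2α - 1) W > 0`.
-/

section Merge

variable {X : Type*}

/-- The point representing a pair of weighted points after merging: the heavier of the two, and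
the first one in case of a tie. -/
noncomputable def mergePoint (a b : X) (wa wb : ℝ) : X :=
  if wb ≤ wa then a else b

lemma mergePoint_of_le {a b : X} {wa wb : ℝ} (h : wb ≤ wa) : mergePoint a b wa wb = a :=
  if_pos h

lemma mergePoint_of_lt {a b : X} {wa wb : ℝ} (h : wa < wb) : mergePoint a b wa wb = b :=
  if_neg h.not_ge

variable [PseudoMetricSpace X]

/-- The weight that a point `x` of weight `w` contributes to the closed ball of radius `s`
around `q`. -/
noncomputable def ballWeight (q : X) (s : ℝ) (x : X) (w : ℝ) : ℝ :=
  if dist x q ≤ s then w else 0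

/-- The weight given to a pair of weighted points after merging at scale `r`: the weights of points
at distance at most `2r` add up, those of points further apart cancel. -/
noncomputable def mergeWeight (r : ℝ) (a b : X) (wa wb : ℝ) : ℝ :=
  if dist a b ≤ 2 * r then wa + wb else |wa - wb|

variable {q a b x y : X} {r s w wa wb u t : ℝ}

lemma ballWeight_of_dist_le (h : dist x q ≤ s) : ballWeight q s x w = w :=
  if_pos h

lemma ballWeight_of_lt_dist (h : s < dist x q) : ballWeight q s x w = 0 :=
  if_neg h.not_ge

lemma ballWeight_nonneg (hw : 0 ≤ w) : 0 ≤ ballWeight q s x w :=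
  ite_nonneg hw le_rfl

lemma ballWeight_le_self (hw : 0 ≤ w) : ballWeight q s x w ≤ w :=
  (ite_le_sup w 0 _).trans_eq (max_eq_left hw)

lemma ballWeight_mono_radius (hw : 0 ≤ w) (hrs : r ≤ s) :
    ballWeight q r x w ≤ ballWeight q s x w := by
  rcases le_or_gt (dist x q) r with hx | hx
  · rw [ballWeight_of_dist_le hx, ballWeight_of_dist_le (hx.trans hrs)]
  · rw [ballWeight_of_lt_dist hx]
    exact ballWeight_nonneg hw

lemma mergeWeight_of_dist_le (h : dist a b ≤ 2 * r) : mergeWeight r a b wa wb = wa + wb :=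
  if_pos h

lemma mergeWeight_of_lt_dist (h : 2 * r < dist a b) : mergeWeight r a b wa wb = |wa - wb| :=
  if_neg h.not_ge

lemma mergeWeight_nonneg (hwa : 0 ≤ wa) (hwb : 0 ≤ wb) : 0 ≤ mergeWeight r a b wa wb :=
  ite_nonneg (add_nonneg hwa hwb) (abs_nonneg _)

lemma mergeWeight_le_add (hwa : 0 ≤ wa) (hwb : 0 ≤ wb) : mergeWeight r a b wa wb ≤ wa + wb :=
  (ite_le_sup _ _ _).trans <|
    sup_le le_rfl (abs_sub_le_iff.2 ⟨by linarith, by linarith⟩)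

lemma dist_mergePoint_le (hab : dist a b ≤ 2 * r) (h : dist a q ≤ r ∨ dist b q ≤ r) :
    dist (mergePoint a b wa wb) q ≤ 3 * r := by
  have hr : 0 ≤ r := by linarith [dist_nonneg (x := a) (y := b)]
  rcases le_or_gt wb wa with hw | hw
  · rw [mergePoint_of_le hw]
    rcases h with h | h <;> linarith [dist_triangle a b q]
  · rw [mergePoint_of_lt hw]
    rcases h with h | h <;> linarith [dist_triangle_left b q a]

lemma ballWeight_add_ballWeight_le_of_dist_le (hwa : 0 ≤ wa) (hwb : 0 ≤ wb)
    (hab : dist a b ≤ 2 * r) :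
    ballWeight q r a wa + ballWeight q r b wb ≤
      ballWeight q (3 * r) (mergePoint a b wa wb) (wa + wb) := by
  by_cases h : dist a q ≤ r ∨ dist b q ≤ r
  · rw [ballWeight_of_dist_le (dist_mergePoint_le hab h)]
    exact add_le_add (ballWeight_le_self hwa) (ballWeight_le_self hwb)
  · obtain ⟨ha, hb⟩ : r < dist a q ∧ r < dist b q := by simpa only [not_or, not_le] using h
    rw [ballWeight_of_lt_dist ha, ballWeight_of_lt_dist hb, add_zero]
    exact ballWeight_nonneg (add_nonneg hwa hwb)

lemma ballWeight_add_ballWeight_le_of_lt_dist (ht : 0 ≤ t) (hxy : 2 * r < dist x y) :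
    ballWeight q r x u + ballWeight q r y t ≤ ballWeight q r x (u - t) + t := by
  rcases le_or_gt (dist x q) r with hx | hx
  · have hy : r < dist y q := by linarith [dist_triangle_right x y q]
    rw [ballWeight_of_dist_le hx, ballWeight_of_lt_dist hy, ballWeight_of_dist_le hx,
      add_zero, sub_add_cancel]
  · rw [ballWeight_of_lt_dist hx, ballWeight_of_lt_dist hx]
    exact add_le_add_right (ballWeight_le_self ht) 0

lemma ballWeight_add_ballWeight_le_merge (hwa : 0 ≤ wa) (hwb : 0 ≤ wb) (hr : 0 ≤ r) :
    ballWeight q r a wa + ballWeight q r b wb ≤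
      ballWeight q (3 * r) (mergePoint a b wa wb) (mergeWeight r a b wa wb) +
        (wa + wb - mergeWeight r a b wa wb) / 2 := by
  have hr3 : r ≤ 3 * r := by linarith
  rcases le_or_gt (dist a b) (2 * r) with hab | hab
  · rw [mergeWeight_of_dist_le hab, sub_self, zero_div, add_zero]
    exact ballWeight_add_ballWeight_le_of_dist_le hwa hwb hab
  rw [mergeWeight_of_lt_dist hab]
  rcases le_or_gt wb wa with hw | hw
  · have hd : 0 ≤ wa - wb := sub_nonneg.2 hw
    rw [mergePoint_of_le hw, abs_of_nonneg hd]
    linarith [ballWeight_add_ballWeight_le_of_lt_dist (q := q) (u := wa) hwb hab,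
      ballWeight_mono_radius (q := q) (x := a) hd hr3]
  · have hd : 0 ≤ wb - wa := sub_nonneg.2 hw.le
    rw [mergePoint_of_lt hw, abs_sub_comm, abs_of_nonneg hd]
    linarith [ballWeight_add_ballWeight_le_of_lt_dist (q := q) (u := wb) hwa (dist_comm a b ▸ hab),
      ballWeight_mono_radius (q := q) (x := b) hd hr3]

lemma sum_ballWeight_add_ballWeight_le_merge {ι : Type*} {S : Finset ι} {a b : ι → X}
    {wa wb : ι → ℝ} (hwa : ∀ i ∈ S, 0 ≤ wa i) (hwb : ∀ i ∈ S, 0 ≤ wb i) (hr : 0 ≤ r) :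
    ∑ i ∈ S, (ballWeight q r (a i) (wa i) + ballWeight q r (b i) (wb i)) ≤
      ∑ i ∈ S, ballWeight q (3 * r) (mergePoint (a i) (b i) (wa i) (wb i))
        (mergeWeight r (a i) (b i) (wa i) (wb i)) +
      (∑ i ∈ S, (wa i + wb i) - ∑ i ∈ S, mergeWeight r (a i) (b i) (wa i) (wb i)) / 2 := by
  rw [← sum_sub_distrib, sum_div, ← sum_add_distrib]
  exact sum_le_sum fun i hi ↦ ballWeight_add_ballWeight_le_merge (hwa i hi) (hwb i hi) hr

end Merge

theorem stmt2_general {X ι : Type*} [PseudoMetricSpace X] (S : Finset ι)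
    (a b : ι → X) (wa wb : ι → ℝ) (hwa : ∀ i ∈ S, 0 ≤ wa i) (hwb : ∀ i ∈ S, 0 ≤ wb i)
    (hWpos : 0 < ∑ i ∈ S, (wa i + wb i)) {α : ℝ} (hα : 1 / 2 < α) (q : X) {r : ℝ} (hr : 0 ≤ r)
    (hball : α * ∑ i ∈ S, (wa i + wb i) ≤
      ∑ i ∈ S, (ballWeight q r (a i) (wa i) + ballWeight q r (b i) (wb i))) :
    0 < ∑ i ∈ S, mergeWeight r (a i) (b i) (wa i) (wb i) ∧
    α * ∑ i ∈ S, mergeWeight r (a i) (b i) (wa i) (wb i) ≤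
      ∑ i ∈ S, ballWeight q (3 * r) (mergePoint (a i) (b i) (wa i) (wb i))
        (mergeWeight r (a i) (b i) (wa i) (wb i)) := by
  have hmerge := hball.trans (sum_ballWeight_add_ballWeight_le_merge hwa hwb hr)
  set W := ∑ i ∈ S, (wa i + wb i)
  set V := ∑ i ∈ S, mergeWeight r (a i) (b i) (wa i) (wb i)
  set B := ∑ i ∈ S, ballWeight q (3 * r) (mergePoint (a i) (b i) (wa i) (wb i))
    (mergeWeight r (a i) (b i) (wa i) (wb i))
  have hVW : V ≤ W := sum_le_sum fun i hi ↦ mergeWeight_le_add (hwa i hi) (hwb i hi)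
  have hBV : B ≤ V := sum_le_sum fun i hi ↦
    ballWeight_le_self (mergeWeight_nonneg (hwa i hi) (hwb i hi))
  constructor
  · have hexcess : 0 < (α - 1 / 2) * W := mul_pos (sub_pos.2 hα) hWpos
    linarith
  · have hscale : (α - 1 / 2) * V ≤ (α - 1 / 2) * W :=
      mul_le_mul_of_nonneg_left hVW (sub_pos.2 hα).le
    linarith

/-- Points in a normed vector space are given in pairs `(a i, b i)` (the pair
`(a_{2i-1}, a_{2i})` of the paper) with weights `(wa i, wb i)`. -/
theorem stmt2 {E : Type*} [NormedAddCommGroup E] [NormedSpace ℝ E]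
    {m : ℕ} (hm : 0 < m)
    (a b : Fin m → E) (wa wb : Fin m → ℝ) (hwa : ∀ i, 0 ≤ wa i) (hwb : ∀ i, 0 ≤ wb i)
    (W : ℝ) (hW : W = ∑ i, (wa i + wb i)) (hWpos : 0 < W)
    (α : ℝ) (hα : 1 / 2 < α) (hα1 : α ≤ 1)
    (q : E) (r : ℝ) (hr : 0 ≤ r)
    (hball : α * W ≤ ∑ i, ((if ‖a i - q‖ ≤ r then wa i else 0) +
                            (if ‖b i - q‖ ≤ r then wb i else 0)))
    (qc : Fin m → E) (hqc : ∀ i, qc i = if wb i ≤ wa i then a i else b i)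
    (v : Fin m → ℝ)
    (hv : ∀ i, v i = if ‖a i - b i‖ ≤ 2 * r then wa i + wb i else |wa i - wb i|) :
    0 < ∑ i, v i ∧
    α * ∑ i, v i ≤ ∑ i ∈ Finset.univ.filter (fun i => ‖qc i - q‖ ≤ 3 * r), v i := by
  simpa only [hqc, hv, ballWeight, mergePoint, mergeWeight, dist_eq_norm, sum_filter] using
    stmt2_general univ a b wa wb (fun i _ ↦ hwa i) (fun i _ ↦ hwb i) (hW ▸ hWpos) hα q hr
      (by simpa only [hW, ballWeight, dist_eq_norm] using hball)
end

section
/- Let α ∈ (1/2, 1], set ε = α − 1/2, and let K be a real number with K ≥ 2 + 1/ε. Let q ∈ E and r ≥ 0 with ∑_{i : ‖a_i − q‖ ≤ r} w_i ≥ αW, and let a ∈ E be a point with ‖a − q‖ ≤ (K−1)r (so the closed ball of radius Kr around a contains the closed ball of radius r around q). Let T = {i : ‖a_i − a‖ ≤ Kr}. Then ∑_{i∈T} w_i > 0, and the weighted centroid c = (∑_{i∈T} w_i a_i) / (∑_{i∈T} w_i) satisfies ‖c − q‖ ≤ (K(1−ε) − 1) · r; in particular, the closed ball of radius K(1−ε)r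 around c contains the closed ball of radius r around q. -/
open Finset

/-!
Let `S` index the points in the ball of radius `r` around `q`. Then `S ⊆ T`, and the weight of `S`
is at least `1/2 + ε` times the total weight, hence at least `1/2 + ε` times that of `T`. Points of
`S` are within `r` of `q`, and all points of `T` are within `K r + (K - 1) r = (2 K - 1) r` of it.
As the distance to `q` is convex, averaging over `T` bounds `‖c - q‖` by
`((1/2 + ε) + (1/2 - ε) (2 K - 1)) r = (K - 2 ε K + 2 ε) r`, and `ε K ≥ 1 + 2 ε` turns this into
`(K (1 - ε) - 1) r`.
-/

theorem centerMass_le_of_le_of_subset {ι 𝕜 : Type*} [Field 𝕜] [LinearOrder 𝕜]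
    [IsStrictOrderedRing 𝕜] {S T : Finset ι} {w f : ι → 𝕜} {α ρ R : 𝕜} (hST : S ⊆ T)
    (hw : ∀ i ∈ T, 0 ≤ w i) (hpos : 0 < ∑ i ∈ T, w i) (hα : α * ∑ i ∈ T, w i ≤ ∑ i ∈ S, w i)
    (hρR : ρ ≤ R) (hS : ∀ i ∈ S, f i ≤ ρ) (hT : ∀ i ∈ T, f i ≤ R) :
    T.centerMass w f ≤ α * ρ + (1 - α) * R := by
  classical
  have hsplit : ∑ i ∈ T \ S, w i + ∑ i ∈ S, w i = ∑ i ∈ T, w i := sum_sdiff hST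
  have hinner : ∑ i ∈ S, w i * f i ≤ (∑ i ∈ S, w i) * ρ := by
    rw [sum_mul]
    exact sum_le_sum fun i hi => mul_le_mul_of_nonneg_left (hS i hi) (hw i (hST hi))
  have houter : ∑ i ∈ T \ S, w i * f i ≤ (∑ i ∈ T \ S, w i) * R := by
    rw [sum_mul]
    refine sum_le_sum fun i hi => ?_
    have hiT := (mem_sdiff.1 hi).1
    exact mul_le_mul_of_nonneg_left (hT i hiT) (hw i hiT)
  simp only [centerMass, smul_eq_mul]
  rw [inv_mul_le_iff₀ hpos]
  calc ∑ i ∈ T, w i * f i = ∑ i ∈ T \ S, w i * f i + ∑ i ∈ S, w i * f i := (sum_sdiff hST).symm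
    _ ≤ (∑ i ∈ T \ S, w i) * R + (∑ i ∈ S, w i) * ρ := add_le_add houter hinner
    _ = (∑ i ∈ T, w i) * R - (∑ i ∈ S, w i) * (R - ρ) := by rw [← hsplit]; ring
    _ ≤ (∑ i ∈ T, w i) * R - (α * ∑ i ∈ T, w i) * (R - ρ) :=
      sub_le_sub_left (mul_le_mul_of_nonneg_right hα (sub_nonneg.2 hρR)) _
    _ = (∑ i ∈ T, w i) * (α * ρ + (1 - α) * R) := by ring

theorem filter_norm_sub_le_subset {ι E : Type*} [SeminormedAddGroup E] (s : Finset ι)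
    (a : ι → E) {p q : E} {r R : ℝ} (h : r + ‖p - q‖ ≤ R) :
    {i ∈ s | ‖a i - p‖ ≤ r} ⊆ {i ∈ s | ‖a i - q‖ ≤ R} :=
  monotone_filter_right s fun i _ hi =>
    (norm_sub_le_norm_sub_add_norm_sub (a i) p q).trans ((add_le_add_left hi _).trans h)

theorem nonneg_of_sum_filter_norm_le_ne_zero {ι E M : Type*} [SeminormedAddGroup E]
    [AddCommMonoid M] {s : Finset ι} {w : ι → M} {v : ι → E} {r : ℝ}
    (h : ∑ i ∈ s with ‖v i‖ ≤ r, w i ≠ 0) : 0 ≤ r := by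
  obtain ⟨i, hi, -⟩ := exists_ne_zero_of_sum_ne_zero h
  exact (norm_nonneg _).trans (mem_filter.1 hi).2

theorem add_mul_two_mul_sub_one_le {𝕜 : Type*} [Field 𝕜] [LinearOrder 𝕜]
    [IsStrictOrderedRing 𝕜] {ε K : 𝕜} (hε : 0 < ε) (hK : 2 + 1 / ε ≤ K) :
    (1 / 2 + ε) + (1 - (1 / 2 + ε)) * (2 * K - 1) ≤ K * (1 - ε) - 1 := by
  have hεK : 2 * ε + 1 ≤ K * ε :=
    calc 2 * ε + 1 = (2 + 1 / ε) * ε := by field_simp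
      _ ≤ K * ε := mul_le_mul_of_nonneg_right hK hε.le
  linarith

section CenterMass

variable {ι E : Type*} [SeminormedAddCommGroup E] [NormedSpace ℝ E] {w : ι → ℝ} {a : ι → E} {q : E}

theorem norm_centerMass_sub_le {T : Finset ι} (hw : ∀ i ∈ T, 0 ≤ w i) (hpos : 0 < ∑ i ∈ T, w i) :
    ‖T.centerMass w a - q‖ ≤ T.centerMass w fun i => ‖a i - q‖ := by
  simpa only [dist_eq_norm, Function.comp_def] using
    (convexOn_dist q convex_univ).map_centerMass_le hw hpos fun i _ => Set.mem_univ (a i)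

theorem norm_centerMass_sub_le_of_subset {S T : Finset ι} {α ρ R : ℝ} (hST : S ⊆ T)
    (hw : ∀ i ∈ T, 0 ≤ w i) (hpos : 0 < ∑ i ∈ T, w i) (hα : α * ∑ i ∈ T, w i ≤ ∑ i ∈ S, w i)
    (hρR : ρ ≤ R) (hS : ∀ i ∈ S, ‖a i - q‖ ≤ ρ) (hT : ∀ i ∈ T, ‖a i - q‖ ≤ R) :
    ‖T.centerMass w a - q‖ ≤ α * ρ + (1 - α) * R :=
  (norm_centerMass_sub_le hw hpos).trans (centerMass_le_of_le_of_subset hST hw hpos hα hρR hS hT)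

theorem stmt3_general {s T : Finset ι} {ε K r : ℝ} {p : E}
    (hw : ∀ i ∈ s, 0 ≤ w i) (hpos : 0 < ∑ i ∈ s, w i) (hε : 0 < ε) (hK : 2 + 1 / ε ≤ K)
    (hball : (1 / 2 + ε) * ∑ i ∈ s, w i ≤ ∑ i ∈ s with ‖a i - q‖ ≤ r, w i)
    (hp : ‖p - q‖ ≤ (K - 1) * r) (hT : T = {i ∈ s | ‖a i - p‖ ≤ K * r}) :
    0 < ∑ i ∈ T, w i ∧
    ‖T.centerMass w a - q‖ ≤ (K * (1 - ε) - 1) * r ∧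
    ∀ x : E, ‖x - q‖ ≤ r → ‖x - T.centerMass w a‖ ≤ K * (1 - ε) * r := by
  set S : Finset ι := {i ∈ s | ‖a i - q‖ ≤ r}
  have hS_pos : 0 < ∑ i ∈ S, w i := (mul_pos (by linarith) hpos).trans_le hball
  have hr : 0 ≤ r := nonneg_of_sum_filter_norm_le_ne_zero hS_pos.ne'
  have hK₁ : 1 ≤ K := by linarith [one_div_pos.2 hε]
  have hTs : T ⊆ s := hT ▸ filter_subset _ _
  have hwT : ∀ i ∈ T, 0 ≤ w i := fun i hi => hw i (hTs hi)
  have hST : S ⊆ T := hT ▸ filter_norm_sub_le_subset s a (by rw [norm_sub_rev]; linarith)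
  have hT_far : T ⊆ {i ∈ s | ‖a i - q‖ ≤ (2 * K - 1) * r} :=
    hT ▸ filter_norm_sub_le_subset s a (by linarith)
  have hT_pos : 0 < ∑ i ∈ T, w i :=
    hS_pos.trans_le (sum_le_sum_of_subset_of_nonneg hST fun i hi _ => hwT i hi)
  have hT_weight : (1 / 2 + ε) * ∑ i ∈ T, w i ≤ ∑ i ∈ S, w i := by
    refine (mul_le_mul_of_nonneg_left ?_ (by linarith)).trans hball
    exact sum_le_sum_of_subset_of_nonneg hTs fun i hi _ => hw i hi
  have hcenter : ‖T.centerMass w a - q‖ ≤ (K * (1 - ε) - 1) * r :=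
    calc ‖T.centerMass w a - q‖ ≤ (1 / 2 + ε) * r + (1 - (1 / 2 + ε)) * ((2 * K - 1) * r) :=
          norm_centerMass_sub_le_of_subset hST hwT hT_pos hT_weight
            (le_mul_of_one_le_left hr (by linarith)) (fun i hi => (mem_filter.1 hi).2)
            fun i hi => (mem_filter.1 (hT_far hi)).2
      _ = ((1 / 2 + ε) + (1 - (1 / 2 + ε)) * (2 * K - 1)) * r := by ring
      _ ≤ (K * (1 - ε) - 1) * r :=
          mul_le_mul_of_nonneg_right (add_mul_two_mul_sub_one_le hε hK) hr
  refine ⟨hT_pos, hcenter, fun x hx => ?_⟩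
  have htriangle := norm_sub_le_norm_sub_add_norm_sub x q (T.centerMass w a)
  rw [norm_sub_rev q] at htriangle
  linarith

end CenterMass

theorem stmt3 {E : Type*} [NormedAddCommGroup E] [NormedSpace ℝ E]
    {n : ℕ} (hn : 0 < n)
    (a : Fin n → E) (w : Fin n → ℝ) (hw : ∀ i, 0 ≤ w i)
    (W : ℝ) (hW : W = ∑ i, w i) (hWpos : 0 < W)
    (α : ℝ) (hα : 1 / 2 < α) (hα1 : α ≤ 1)
    (ε : ℝ) (hε : ε = α - 1 / 2)
    (K : ℝ) (hK : 2 + 1 / ε ≤ K)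
    (q : E) (r : ℝ) (hr : 0 ≤ r)
    (hball : α * W ≤ ∑ i ∈ Finset.univ.filter (fun i => ‖a i - q‖ ≤ r), w i)
    (pt : E) (hpt : ‖pt - q‖ ≤ (K - 1) * r)
    (T : Finset (Fin n)) (hT : T = Finset.univ.filter (fun i => ‖a i - pt‖ ≤ K * r))
    (c : E) (hc : c = (∑ i ∈ T, w i)⁻¹ • ∑ i ∈ T, w i • a i) :
    0 < ∑ i ∈ T, w i ∧
    ‖c - q‖ ≤ (K * (1 - ε) - 1) * r ∧
    ∀ x : E, ‖x - q‖ ≤ r → ‖x - c‖ ≤ K * (1 - ε) * r := by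
  subst hW hε hc
  exact stmt3_general (fun i _ => hw i) hWpos (sub_pos.2 hα) hK (by rwa [add_sub_cancel]) hpt hT
end

section
/- Let α ∈ (0, 1), set C = 2 + 2/α, let q ∈ X and r ≥ 0, and suppose that 2 · (weight of B(q, r)) ≥ (weight of B(q, (2C+3)r)) + αW. Let z ∈ X be a point such that B(z, Cr) intersects B(q, r), i.e. there exists x ∈ X with dist(x, z) ≤ Cr and dist(x, q) ≤ r. Then every point of B(q, r) lies in B(z, (C+2)r), every point of B(z, (C+2)r) lies in B(q, (2C+3)r), and, writing βW for the weight of B(z, (C+2)r), one has β ≥ α and the weight of B(q, r) is at least ((β+α)/2) · W, which is at least ((1+α)/2) times the weight of B(z, (C+2)r). -/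
open Finset

/-!
The balls enter only through two inclusions `B(q, r) ⊆ B(z, (C + 2)r) ⊆ B(q, (2C + 3)r)`, which the
triangle inequality through a common point gives for every `C`, and the weight only through its
monotonicity. If `A ⊆ B ⊆ D` and `m D + α * m univ ≤ 2 * m A`, then replacing `m D` by the smaller
`m B` bounds the average of `m B` and `α * m univ` by `m A`. As `m A ≤ m B ≤ m univ`, the same
inequality then shows that `B` carries at least a proportion `α` of the total and `A` at least a
proportion `(1 + α) / 2` of `m B`.
-/

open Metric

theorem closedBall_subset_closedBall_of_inter_nonempty {X : Type*} [PseudoMetricSpace X]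
    {x y : X} {s t : ℝ} (h : (closedBall x s ∩ closedBall y t).Nonempty) (ρ : ℝ) :
    closedBall x ρ ⊆ closedBall y (ρ + (s + t)) :=
  closedBall_subset_closedBall' <| by
    gcongr
    exact dist_le_add_of_nonempty_closedBall_inter_closedBall h

section MonotoneSetFunction

variable {X K : Type*} [Field K] [LinearOrder K] [IsStrictOrderedRing K]
  {m : Set X → K} {A B D : Set X} {α : K}

theorem half_add_mul_univ_le_of_subset (hm : Monotone m) (hBD : B ⊆ D)
    (h : m D + α * m Set.univ ≤ 2 * m A) : (m B + α * m Set.univ) / 2 ≤ m A := by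
  have hmBD : m B ≤ m D := hm hBD
  linarith

theorem mul_univ_le_of_subset_of_subset (hm : Monotone m) (hAB : A ⊆ B) (hBD : B ⊆ D)
    (h : m D + α * m Set.univ ≤ 2 * m A) : α * m Set.univ ≤ m B := by
  have hmAB : m A ≤ m B := hm hAB
  have hhalf : (m B + α * m Set.univ) / 2 ≤ m A := half_add_mul_univ_le_of_subset hm hBD h
  linarith

theorem half_one_add_mul_le_of_subset (hm : Monotone m) (hα : 0 ≤ α) (hBD : B ⊆ D)
    (h : m D + α * m Set.univ ≤ 2 * m A) : (1 + α) / 2 * m B ≤ m A :=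
  calc (1 + α) / 2 * m B = (m B + α * m B) / 2 := by ring
    _ ≤ (m B + α * m Set.univ) / 2 := by gcongr; exact hm B.subset_univ
    _ ≤ m A := half_add_mul_univ_le_of_subset hm hBD h

end MonotoneSetFunction

section WeightOn

variable {ι X M : Type*} [Fintype ι] [AddCommMonoid M]

/-- The weight `∑ w i` over the indices `i` with `a i ∈ s`, that is, the value at `s` of the
discrete measure with an atom of mass `w i` at each `a i`. It is written with indicators so that
membership in `s` need not be decidable. -/
noncomputable def weightOn (a : ι → X) (w : ι → M) (s : Set X) : M :=
  ∑ i, (a ⁻¹' s).indicator w i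

theorem weightOn_univ (a : ι → X) (w : ι → M) : weightOn a w Set.univ = ∑ i, w i := by
  simp [weightOn]

theorem weightOn_closedBall [PseudoMetricSpace X] (a : ι → X) (w : ι → M) (y : X) (s : ℝ) :
    weightOn a w (closedBall y s) = ∑ i with dist (a i) y ≤ s, w i := by
  classical simp [weightOn, Set.indicator_apply, sum_filter]

theorem monotone_weightOn [PartialOrder M] [IsOrderedAddMonoid M] (a : ι → X) {w : ι → M}
    (hw : ∀ i, 0 ≤ w i) : Monotone (weightOn a w) := fun _ _ hst =>
  sum_le_sum fun i _ => Set.indicator_le_indicator_of_subset (Set.preimage_mono hst) hw i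

end WeightOn

theorem stmt4_general {X K : Type*} [PseudoMetricSpace X]
    [Field K] [LinearOrder K] [IsStrictOrderedRing K]
    {m : Set X → K} (hm : Monotone m) (hpos : 0 < m Set.univ) {α : K} (hα : 0 ≤ α)
    {C r : ℝ} {q z : X}
    (hmain : m (closedBall q ((2 * C + 3) * r)) + α * m Set.univ ≤ 2 * m (closedBall q r))
    (hz : (closedBall z (C * r) ∩ closedBall q r).Nonempty)
    {β : K} (hβ : β * m Set.univ = m (closedBall z ((C + 2) * r))) :
    closedBall q r ⊆ closedBall z ((C + 2) * r) ∧
    closedBall z ((C + 2) * r) ⊆ closedBall q ((2 * C + 3) * r) ∧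
    α ≤ β ∧
    (β + α) / 2 * m Set.univ ≤ m (closedBall q r) ∧
    (1 + α) / 2 * m (closedBall z ((C + 2) * r)) ≤ m (closedBall q r) := by
  have hqz : closedBall q r ⊆ closedBall z ((C + 2) * r) := by
    convert closedBall_subset_closedBall_of_inter_nonempty (Set.inter_comm _ _ ▸ hz) r using 2
    ring
  have hzq : closedBall z ((C + 2) * r) ⊆ closedBall q ((2 * C + 3) * r) := by
    convert closedBall_subset_closedBall_of_inter_nonempty hz ((C + 2) * r) using 2
    ring
  refine ⟨hqz, hzq, ?_, ?_, half_one_add_mul_le_of_subset hm hα hzq hmain⟩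
  · exact le_of_mul_le_mul_right (hβ ▸ mul_univ_le_of_subset_of_subset hm hqz hzq hmain) hpos
  · calc (β + α) / 2 * m Set.univ
        = (m (closedBall z ((C + 2) * r)) + α * m Set.univ) / 2 := by rw [← hβ]; ring
      _ ≤ m (closedBall q r) := half_add_mul_univ_le_of_subset hm hzq hmain

theorem stmt4 {X : Type*} [MetricSpace X] {n : ℕ} (hn : 0 < n)
    (a : Fin n → X) (w : Fin n → ℝ) (hw : ∀ i, 0 ≤ w i)
    (W : ℝ) (hW : W = ∑ i, w i) (hWpos : 0 < W)
    (α : ℝ) (hα0 : 0 < α) (hα1 : α < 1)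
    (C : ℝ) (hC : C = 2 + 2 / α)
    (ballWeight : X → ℝ → ℝ)
    (hbw : ∀ y s, ballWeight y s = ∑ i ∈ Finset.univ.filter (fun i => dist (a i) y ≤ s), w i)
    (q : X) (r : ℝ) (hr : 0 ≤ r)
    (hmain : ballWeight q ((2 * C + 3) * r) + α * W ≤ 2 * ballWeight q r)
    (z : X) (hz : ∃ x : X, dist x z ≤ C * r ∧ dist x q ≤ r)
    (β : ℝ) (hβ : β * W = ballWeight z ((C + 2) * r)) :
    (∀ x : X, dist x q ≤ r → dist x z ≤ (C + 2) * r) ∧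
    (∀ x : X, dist x z ≤ (C + 2) * r → dist x q ≤ (2 * C + 3) * r) ∧
    α ≤ β ∧
    ((β + α) / 2) * W ≤ ballWeight q r ∧
    ((1 + α) / 2) * ballWeight z ((C + 2) * r) ≤ ballWeight q r := by
  obtain rfl : ballWeight = fun y s => weightOn a w (closedBall y s) := by
    funext y s
    rw [hbw, weightOn_closedBall]
  obtain rfl : W = weightOn a w Set.univ := by rw [weightOn_univ, hW]
  exact stmt4_general (monotone_weightOn a hw) hWpos hα0.le hmain hz hβ
end

section
/- Let α ∈ (0, 1], let p ∈ X and r ≥ 0, and suppose the weight of B(p, r) is at least αW. Then there exists a natural number s with (3/2)^s · α ≤ 1 such that the weight of B(p, (8/α + 7)^s · r) is at least (3/2)^s · αW while the weight of B(p, (8/α + 7)^{s+1} · r) is strictly less than (3/2)^{s+1} · αW. Consequently, writing B' = B(p, (8/α+7)^s · r), the weight of B' exceeds (weight of B(p, (8/α+7)^{s+1} · r)) − (weight of B') + (α/2) · W. -/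
open Finset

/-!
Only one property of ball weights matters: they are bounded by `W`. Hence the weights of the balls
of radii `(8/α + 7)^t * r` cannot dominate the unbounded sequence `(3/2)^t * α * W` forever,
although they do at `t = 0`. Across the step where domination first fails, the weight grows by a
factor less than `3/2`, so less weight is gained than was already there; the margin exceeds
`(2 - 3/2) * (3/2)^s * α * W`.
-/

section Growth

variable {K : Type*} [CommRing K] [LinearOrder K] [IsStrictOrderedRing K]

theorem exists_lt_pow_mul [Archimedean K] {c C : K} (hc : 1 < c) (hC : 0 < C) (W : K) :
    ∃ t : ℕ, W < c ^ t * C := by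
  obtain ⟨m, hm⟩ := Archimedean.arch W hC
  obtain ⟨t, ht⟩ := pow_unbounded_of_one_lt (m : K) hc
  rw [nsmul_eq_mul] at hm
  exact ⟨t, hm.trans_lt (mul_lt_mul_of_pos_right ht hC)⟩

theorem exists_pow_mul_le_and_lt_pow_succ_mul [Archimedean K] {b : ℕ → K} {c C W : K}
    (hc : 1 < c) (hC : 0 < C) (hb : ∀ t, b t ≤ W) (hb0 : C ≤ b 0) :
    ∃ s : ℕ, c ^ s * C ≤ b s ∧ b (s + 1) < c ^ (s + 1) * C := by
  have hfail : ∃ t : ℕ, b t < c ^ t * C :=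
    (exists_lt_pow_mul hc hC W).imp fun t ht => (hb t).trans_lt ht
  have hstart : ¬ b 0 < c ^ 0 * C := by rwa [pow_zero, one_mul, not_lt]
  obtain ⟨s, hs, hs'⟩ := Nat.exists_not_and_succ_of_not_zero_of_exists hstart hfail
  exact ⟨s, not_lt.1 hs, hs'⟩

theorem sub_add_two_sub_mul_lt {c C x u v : K} (hc : c ≤ 2) (hCx : C ≤ x) (hxu : x ≤ u)
    (hv : v < c * x) : v - u + (2 - c) * C < u := by
  have hmargin : (2 - c) * C ≤ (2 - c) * x := mul_le_mul_of_nonneg_left hCx (sub_nonneg.2 hc)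
  linarith

theorem stmt5_general [Archimedean K] {b : ℕ → K} {c α W : K} (hc : 1 < c) (hc2 : c ≤ 2)
    (hα : 0 < α) (hW : 0 < W) (hb : ∀ t, b t ≤ W) (hb0 : α * W ≤ b 0) :
    ∃ s : ℕ, c ^ s * α ≤ 1 ∧ c ^ s * α * W ≤ b s ∧ b (s + 1) < c ^ (s + 1) * α * W ∧
      b (s + 1) - b s + (2 - c) * (α * W) < b s := by
  have hαW : 0 < α * W := mul_pos hα hW
  obtain ⟨s, hle, hlt⟩ := exists_pow_mul_le_and_lt_pow_succ_mul hc hαW hb hb0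
  have hgap : b (s + 1) - b s + (2 - c) * (α * W) < b s :=
    sub_add_two_sub_mul_lt hc2 (le_mul_of_one_le_left hαW.le (one_le_pow₀ hc.le)) hle
      (by rwa [pow_succ', mul_assoc] at hlt)
  rw [← mul_assoc] at hle hlt
  have hpow : c ^ s * α ≤ 1 :=
    le_of_mul_le_mul_right (by simpa only [one_mul] using hle.trans (hb s)) hW
  exact ⟨s, hpow, hle, hlt, hgap⟩

end Growth

theorem stmt5 {X : Type*} [MetricSpace X] {n : ℕ} (hn : 0 < n)
    (a : Fin n → X) (w : Fin n → ℝ) (hw : ∀ i, 0 ≤ w i)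
    (W : ℝ) (hW : W = ∑ i, w i) (hWpos : 0 < W)
    (α : ℝ) (hα0 : 0 < α) (hα1 : α ≤ 1)
    (ballWeight : X → ℝ → ℝ)
    (hbw : ∀ y s, ballWeight y s = ∑ i ∈ Finset.univ.filter (fun i => dist (a i) y ≤ s), w i)
    (p : X) (r : ℝ) (hr : 0 ≤ r)
    (hball : α * W ≤ ballWeight p r) :
    ∃ s : ℕ, ((3 : ℝ) / 2) ^ s * α ≤ 1 ∧
      ((3 : ℝ) / 2) ^ s * α * W ≤ ballWeight p ((8 / α + 7) ^ s * r) ∧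
      ballWeight p ((8 / α + 7) ^ (s + 1) * r) < ((3 : ℝ) / 2) ^ (s + 1) * α * W ∧
      ballWeight p ((8 / α + 7) ^ (s + 1) * r) - ballWeight p ((8 / α + 7) ^ s * r) +
          (α / 2) * W < ballWeight p ((8 / α + 7) ^ s * r) := by
  have hle : ∀ y s, ballWeight y s ≤ W := fun y s => by
    rw [hbw, hW]
    exact sum_le_univ_sum_of_nonneg hw
  have hmargin : (2 - 3 / 2) * (α * W) = α / 2 * W := by ring
  simpa only [hmargin] using
    stmt5_general (b := fun t => ballWeight p ((8 / α + 7) ^ t * r)) (c := 3 / 2)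
      (by norm_num) (by norm_num) hα0 hWpos (fun _ => hle _ _)
      (by simpa only [pow_zero, one_mul] using hball)
end

section
/- Let α ∈ (1/2, 1]. For each i ∈ {1, …, n} let r_i be the smallest s ≥ 0 such that the weight of B(a_i, s) is at least αW (this minimum exists), and let i* be an index at which r_{i*} = min(r_1, …, r_n); set p = a_{i*} and s* = r_{i*}. Then for every q ∈ X and r ≥ 0 such that the weight of B(q, r) is at least αW, one has s* ≤ 2r and dist(p, q) ≤ s* + r; in particular, B(p, s*) is a ball of radius at most 2r containing at least αW weight which intersects every ball of radius r containing at least αW weight. -/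
/-!
Call a closed ball heavy if it carries more than half of the total weight. Two heavy balls share
some `a k`, so the distance of their centres is at most the sum of their radii; this is the bound
on `dist p q`. Compared with itself, a heavy ball `B(q, r)` contains some `a j`, so
`B(q, r) ⊆ B(a j, 2r)` and `s* ≤ r_j ≤ 2r`. Minimal radii exist because a ball can be shrunk,
without losing points, until its radius is `0` or one of the finitely many distances to its centre.
-/

open Finset

section Sublevel

variable {ι R : Type*} [Fintype ι] [LinearOrder R]

theorem exists_mem_insert_image_le_iff_le [DecidableEq R] (f : ι → R) {b s : R} (hbs : b ≤ s) :
    ∃ d ∈ insert b (univ.image f), b ≤ d ∧ d ≤ s ∧ ∀ i, f i ≤ d ↔ f i ≤ s := by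
  have hb : b ∈ {x ∈ insert b (univ.image f) | x ≤ s} :=
    mem_filter.2 ⟨mem_insert_self _ _, hbs⟩
  obtain ⟨d, hd, hmax⟩ := exists_max_image _ id ⟨b, hb⟩
  obtain ⟨hdD, hds⟩ := mem_filter.1 hd
  refine ⟨d, hdD, hmax b hb, hds, fun i => ⟨fun hid => hid.trans hds, fun his => ?_⟩⟩
  exact hmax (f i) (mem_filter.2 ⟨mem_insert_of_mem (mem_image_of_mem f (mem_univ i)), his⟩)

theorem exists_isLeast_filter_le (f : ι → R) (b : R) {P : Finset ι → Prop} (hP : P univ) :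
    ∃ s, IsLeast {s | b ≤ s ∧ P {i | f i ≤ s}} s := by
  classical
  let D : Finset R := insert b (univ.image f)
  have hD : D.Nonempty := insert_nonempty _ _
  have hmax : b ≤ D.max' hD ∧ P {i | f i ≤ D.max' hD} := by
    refine ⟨D.le_max' b (mem_insert_self _ _), ?_⟩
    rwa [filter_true_of_mem fun i _ =>
      D.le_max' (f i) (mem_insert_of_mem (mem_image_of_mem f (mem_univ i)))]
  obtain ⟨m, hm, hmin⟩ := exists_min_image {d ∈ D | b ≤ d ∧ P {i | f i ≤ d}} id
    ⟨D.max' hD, mem_filter.2 ⟨D.max'_mem hD, hmax⟩⟩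
  refine ⟨m, (mem_filter.1 hm).2, fun s ⟨hbs, hs⟩ => ?_⟩
  obtain ⟨d, hdD, hbd, hds, hiff⟩ := exists_mem_insert_image_le_iff_le f hbs
  have hd : P {i | f i ≤ d} := by simpa only [hiff] using hs
  exact (hmin d (mem_filter.2 ⟨hdD, hbd, hd⟩)).trans hds

end Sublevel

theorem inter_nonempty_of_sum_lt_sum_add_sum {ι M : Type*} [DecidableEq ι] [AddCommMonoid M]
    [Preorder M] [IsOrderedAddMonoid M] {w : ι → M} {s t u : Finset ι} (hts : t ⊆ s) (hus : u ⊆ s)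
    (hw : ∀ i ∈ s, 0 ≤ w i) (h : ∑ i ∈ s, w i < ∑ i ∈ t, w i + ∑ i ∈ u, w i) :
    (t ∩ u).Nonempty := by
  by_contra! hempty
  refine h.not_ge ?_
  rw [← sum_union (disjoint_iff_inter_eq_empty.2 hempty)]
  exact sum_le_sum_of_subset_of_nonneg (union_subset hts hus) fun i hi _ => hw i hi

section WeightedPoints

variable {X ι M : Type*} [PseudoMetricSpace X] [Fintype ι] [AddCommMonoid M] [Preorder M]
  {a : ι → X} {w : ι → M} {t u : M} {p q : X} {r s : ℝ}

/-- The radii `s ≥ 0` for which the closed ball `B(q, s)` contains weight at least `t`, where the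
point `a i` carries the weight `w i`. The weight is a sum over indices, so that points which
coincide count separately. -/
def heavyRadii (a : ι → X) (w : ι → M) (t : M) (q : X) : Set ℝ :=
  {s | 0 ≤ s ∧ t ≤ ∑ i with dist (a i) q ≤ s, w i}

theorem exists_isLeast_heavyRadii (a : ι → X) (ht : t ≤ ∑ i, w i) (q : X) :
    ∃ s, IsLeast (heavyRadii a w t q) s :=
  exists_isLeast_filter_le (fun i => dist (a i) q) 0 (P := fun A => t ≤ ∑ i ∈ A, w i) ht

variable [IsOrderedAddMonoid M]

theorem add_dist_mem_heavyRadii (hw : ∀ i, 0 ≤ w i) (hr : r ∈ heavyRadii a w t q) (p : X) :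
    r + dist q p ∈ heavyRadii a w t p := by
  refine ⟨add_nonneg hr.1 dist_nonneg, hr.2.trans ?_⟩
  refine sum_le_sum_of_subset_of_nonneg (monotone_filter_right _ fun i _ hi => ?_) fun i _ _ => hw i
  exact (dist_triangle (a i) q p).trans (add_le_add_left hi _)

theorem exists_dist_le_of_mem_heavyRadii (hw : ∀ i, 0 ≤ w i) (htu : ∑ i, w i < t + u)
    (hr : r ∈ heavyRadii a w t p) (hs : s ∈ heavyRadii a w u q) :
    ∃ i, dist (a i) p ≤ r ∧ dist (a i) q ≤ s := by
  classical
  obtain ⟨i, hi⟩ := inter_nonempty_of_sum_lt_sum_add_sum (subset_univ _) (subset_univ _)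
    (fun i _ => hw i) (htu.trans_le (add_le_add hr.2 hs.2))
  exact ⟨i, by simpa only [mem_inter, mem_filter, mem_univ, true_and] using hi⟩

theorem dist_le_add_of_mem_heavyRadii (hw : ∀ i, 0 ≤ w i) (htu : ∑ i, w i < t + u)
    (hr : r ∈ heavyRadii a w t p) (hs : s ∈ heavyRadii a w u q) : dist p q ≤ r + s := by
  obtain ⟨i, hip, hiq⟩ := exists_dist_le_of_mem_heavyRadii hw htu hr hs
  exact (dist_triangle_left p q (a i)).trans (add_le_add hip hiq)

end WeightedPoints

theorem stmt9_general {X ι M : Type*} [PseudoMetricSpace X] [Fintype ι] [AddCommMonoid M]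
    [Preorder M] [IsOrderedAddMonoid M] (a : ι → X) {w : ι → M} (hw : ∀ i, 0 ≤ w i)
    {t : M} (htW : t ≤ ∑ i, w i) (hWt : ∑ i, w i < t + t) :
    (∀ q, ∃ s, IsLeast (heavyRadii a w t q) s) ∧
    ∀ rr : ι → ℝ, (∀ i, IsLeast (heavyRadii a w t (a i)) (rr i)) →
      ∀ istar, (∀ i, rr istar ≤ rr i) → ∀ q, ∀ r ∈ heavyRadii a w t q,
        rr istar ≤ 2 * r ∧ dist (a istar) q ≤ rr istar + r := by
  refine ⟨exists_isLeast_heavyRadii a htW, fun rr hrr istar histar q r hr => ⟨?_, ?_⟩⟩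
  · obtain ⟨j, hj, -⟩ := exists_dist_le_of_mem_heavyRadii hw hWt hr hr
    calc rr istar ≤ rr j := histar j
      _ ≤ r + dist q (a j) := (hrr j).2 (add_dist_mem_heavyRadii hw hr (a j))
      _ ≤ 2 * r := by linarith [dist_comm q (a j)]
  · exact dist_le_add_of_mem_heavyRadii hw hWt (hrr istar).1 hr

theorem stmt9 {X : Type*} [MetricSpace X] {n : ℕ} (hn : 0 < n)
    (a : Fin n → X) (w : Fin n → ℝ) (hw : ∀ i, 0 ≤ w i)
    (W : ℝ) (hW : W = ∑ i, w i) (hWpos : 0 < W)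
    (α : ℝ) (hα : 1 / 2 < α) (hα1 : α ≤ 1)
    (rr : Fin n → ℝ)
    (hrr : ∀ i : Fin n, IsLeast {s : ℝ | 0 ≤ s ∧
      α * W ≤ ∑ j ∈ Finset.univ.filter (fun j => dist (a j) (a i) ≤ s), w j} (rr i))
    (istar : Fin n) (histar : ∀ i : Fin n, rr istar ≤ rr i) :
    (∀ i : Fin n, ∃ s : ℝ, IsLeast {s : ℝ | 0 ≤ s ∧
      α * W ≤ ∑ j ∈ Finset.univ.filter (fun j => dist (a j) (a i) ≤ s), w j} s) ∧
    ∀ (q : X) (r : ℝ), 0 ≤ r →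
      α * W ≤ ∑ i ∈ Finset.univ.filter (fun i => dist (a i) q ≤ r), w i →
      rr istar ≤ 2 * r ∧ dist (a istar) q ≤ rr istar + r := by
  have hαW : α * W ≤ ∑ i, w i := hW ▸ mul_le_of_le_one_left hWpos.le hα1
  have hWα : ∑ i, w i < α * W + α * W := by rw [← hW]; nlinarith
  obtain ⟨hexists, hbounds⟩ := stmt9_general a hw hαW hWα
  exact ⟨fun i => hexists (a i), fun q r hr hq => hbounds rr hrr istar histar q r ⟨hr, hq⟩⟩
end

section
/- Let α ∈ (0, 1]. Then there exist ℓ ≤ ⌊1/α⌋, indices i_1, …, i_ℓ ∈ {1, …, n}, and radii s_1, …, s_ℓ ≥ 0 such that: (a) for each k ∈ {1, …, ℓ}, the weight of B(a_{i_k}, s_k) is at least αW; and (b) for every q ∈ X and r ≥ 0 such that the weight of B(q, r) is at least αW, there exists k ∈ {1, …, ℓ} with s_k ≤ 2r and with B(q, r) ∩ B(a_{i_k}, s_k) nonempty (i.e. some x ∈ X satisfies dist(x, q) ≤ r and dist(x, a_{i_k}) ≤ s_k). -/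
open Finset

/-!
Fix the threshold `c = α W > 0` and consider the finitely many balls centred at one of the points
and passing through one of the points. Choose greedily: among those balls whose surviving points
have weight at least `c`, take one of least radius, delete its points, and repeat. Each step deletes
weight at least `c`, so there are at most `W / c = 1 / α` steps.

A ball `B(q, r)` of weight at least `c` contains some `a i`, and its points all lie in the ball
around `a i` through the farthest of them, whose radius is at most `2 r`. As long as no point of
`B(q, r)` has been deleted, this ball is a candidate. Hence some chosen ball meets `B(q, r)`, and
the first one to do so has radius at most `2 r`.
-/

section Greedy

variable {ι β M R : Type*} [AddCommMonoid M] [PartialOrder M] [IsOrderedAddMonoid M]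
  [LinearOrder R] [Finite β]

lemma exists_heavy_subfamily_meeting_heavy_subsets {w : ι → M} (hw : ∀ i, 0 ≤ w i) {c : M}
    (hc : 0 < c) (F : β → Finset ι) (cost : β → R) (U : Finset ι) :
    ∃ (ℓ : ℕ) (g : Fin ℓ → β), ℓ • c ≤ ∑ i ∈ U, w i ∧
      (∀ k, c ≤ ∑ i ∈ F (g k), w i) ∧
      ∀ S ⊆ U, c ≤ ∑ i ∈ S, w i → ∀ b, S ⊆ F b →
        ∃ k, cost (g k) ≤ cost b ∧ ∃ i ∈ S, i ∈ F (g k) := by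
  classical
  have sum_mono {A B : Finset ι} (hAB : A ⊆ B) : ∑ i ∈ A, w i ≤ ∑ i ∈ B, w i :=
    sum_le_sum_of_subset_of_nonneg hAB fun i _ _ => hw i
  induction U using Finset.strongInduction with
  | H U ih =>
  let candidates : Set β := {b | c ≤ ∑ i ∈ U ∩ F b, w i}
  have mem_candidates {S : Finset ι} (hSU : S ⊆ U) (hcS : c ≤ ∑ i ∈ S, w i) {b : β}
      (hSb : S ⊆ F b) : b ∈ candidates :=
    hcS.trans (sum_mono (subset_inter hSU hSb))
  obtain hempty | hne := candidates.eq_empty_or_nonempty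
  · refine ⟨0, Fin.elim0, by simpa using sum_nonneg fun i _ => hw i, fun k => k.elim0, ?_⟩
    intro S hSU hcS b hSb
    exact absurd (mem_candidates hSU hcS hSb) (hempty ▸ Set.notMem_empty b)
  · obtain ⟨b₀, hb₀, hmin⟩ := Set.exists_min_image candidates cost candidates.toFinite hne
    have hmeet : (U ∩ F b₀).Nonempty := nonempty_of_sum_ne_zero (hc.trans_le hb₀).ne'
    have hlt : U \ F b₀ ⊂ U := by
      simpa only [sdiff_inter_self_left] using sdiff_ssubset inter_subset_left hmeet
    obtain ⟨ℓ, g, hlen, hheavy, hcover⟩ := ih _ hlt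
    refine ⟨ℓ + 1, Fin.cons b₀ g, ?_, ?_, ?_⟩
    · rw [succ_nsmul', ← sum_inter_add_sum_sdiff U (F b₀)]
      exact add_le_add hb₀ hlen
    · exact Fin.cases (hb₀.trans (sum_mono inter_subset_right)) hheavy
    · intro S hSU hcS b hSb
      by_cases hdisj : Disjoint S (F b₀)
      · obtain ⟨k, hk⟩ := hcover S (subset_sdiff.2 ⟨hSU, hdisj⟩) hcS b hSb
        exact ⟨k.succ, hk⟩
      · exact ⟨0, hmin b (mem_candidates hSU hcS hSb), not_disjoint_iff.1 hdisj⟩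

end Greedy

section Balls

variable {X ι : Type*} [PseudoMetricSpace X]

lemma exists_farthest_dist_le_two_mul (a : ι → X) {S : Finset ι} {q : X} {r : ℝ}
    (hS : ∀ k ∈ S, dist (a k) q ≤ r) {i : ι} (hi : i ∈ S) :
    ∃ j, (∀ k ∈ S, dist (a k) (a i) ≤ dist (a j) (a i)) ∧ dist (a j) (a i) ≤ 2 * r := by
  obtain ⟨j, hj, hmax⟩ := exists_max_image S (fun k => dist (a k) (a i)) ⟨i, hi⟩
  refine ⟨j, hmax, ?_⟩
  calc dist (a j) (a i) ≤ dist (a j) q + dist (a i) q := dist_triangle_right _ _ _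
    _ ≤ r + r := add_le_add (hS j hj) (hS i hi)
    _ = 2 * r := (two_mul r).symm

variable [Fintype ι]

lemma exists_heavy_balls_meeting_heavy_balls {M : Type*} [AddCommMonoid M] [PartialOrder M]
    [IsOrderedAddMonoid M] (a : ι → X) {w : ι → M} (hw : ∀ i, 0 ≤ w i) {c : M} (hc : 0 < c) :
    ∃ (ℓ : ℕ) (idx : Fin ℓ → ι) (s : Fin ℓ → ℝ), ℓ • c ≤ ∑ i, w i ∧
      (∀ k, 0 ≤ s k ∧ c ≤ ∑ i with dist (a i) (a (idx k)) ≤ s k, w i) ∧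
      ∀ (q : X) (r : ℝ), c ≤ ∑ i with dist (a i) q ≤ r, w i →
        ∃ k, s k ≤ 2 * r ∧ ∃ j, dist (a j) q ≤ r ∧ dist (a j) (a (idx k)) ≤ s k := by
  let radius (p : ι × ι) : ℝ := dist (a p.2) (a p.1)
  let ball (p : ι × ι) : Finset ι := {i | dist (a i) (a p.1) ≤ radius p}
  obtain ⟨ℓ, g, hlen, hheavy, hcover⟩ :=
    exists_heavy_subfamily_meeting_heavy_subsets hw hc ball radius univ
  refine ⟨ℓ, fun k => (g k).1, fun k => radius (g k), hlen,
    fun k => ⟨dist_nonneg, hheavy k⟩, fun q r hqr => ?_⟩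
  let S : Finset ι := {i | dist (a i) q ≤ r}
  have hS : ∀ i ∈ S, dist (a i) q ≤ r := fun i hi => (mem_filter_univ i).1 hi
  obtain ⟨i, hi⟩ : S.Nonempty := nonempty_of_sum_ne_zero (hc.trans_le hqr).ne'
  obtain ⟨j, hfar, hj⟩ := exists_farthest_dist_le_two_mul a hS hi
  have hSball : S ⊆ ball (i, j) := fun k hk => (mem_filter_univ k).2 (hfar k hk)
  obtain ⟨k, hk, m, hmS, hmk⟩ := hcover S (subset_univ S) hqr (i, j) hSball
  exact ⟨k, hk.trans hj, m, hS m hmS, (mem_filter_univ m).1 hmk⟩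

theorem stmt10_general (a : ι → X) (w : ι → ℝ) (hw : ∀ i, 0 ≤ w i)
    (W : ℝ) (hW : W = ∑ i, w i) (hWpos : 0 < W) (α : ℝ) (hα : 0 < α) :
    ∃ ℓ : ℕ, ℓ ≤ ⌊1 / α⌋₊ ∧
      ∃ (idx : Fin ℓ → ι) (s : Fin ℓ → ℝ),
        (∀ k, 0 ≤ s k ∧ α * W ≤ ∑ i with dist (a i) (a (idx k)) ≤ s k, w i) ∧
        ∀ (q : X) (r : ℝ), α * W ≤ ∑ i with dist (a i) q ≤ r, w i →
          ∃ k, s k ≤ 2 * r ∧ ∃ x : X, dist x q ≤ r ∧ dist x (a (idx k)) ≤ s k := by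
  obtain ⟨ℓ, idx, s, hlen, hheavy, hcover⟩ :=
    exists_heavy_balls_meeting_heavy_balls a hw (mul_pos hα hWpos)
  have hℓ : ℓ * α ≤ 1 := by
    rw [nsmul_eq_mul, ← mul_assoc, ← hW] at hlen
    exact (mul_le_iff_le_one_left hWpos).1 hlen
  refine ⟨ℓ, Nat.le_floor ((le_div_iff₀ hα).2 hℓ), idx, s, hheavy, fun q r hqr => ?_⟩
  obtain ⟨k, hk, j, hjq, hjk⟩ := hcover q r hqr
  exact ⟨k, hk, a j, hjq, hjk⟩

end Balls

theorem stmt10 {X : Type*} [MetricSpace X] {n : ℕ} (hn : 0 < n)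
    (a : Fin n → X) (w : Fin n → ℝ) (hw : ∀ i, 0 ≤ w i)
    (W : ℝ) (hW : W = ∑ i, w i) (hWpos : 0 < W)
    (α : ℝ) (hα0 : 0 < α) (hα1 : α ≤ 1) :
    ∃ ℓ : ℕ, ℓ ≤ ⌊1 / α⌋₊ ∧
      ∃ (idx : Fin ℓ → Fin n) (s : Fin ℓ → ℝ),
        (∀ k : Fin ℓ, 0 ≤ s k ∧
          α * W ≤ ∑ i ∈ Finset.univ.filter (fun i => dist (a i) (a (idx k)) ≤ s k), w i) ∧
        ∀ (q : X) (r : ℝ), 0 ≤ r →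
          α * W ≤ ∑ i ∈ Finset.univ.filter (fun i => dist (a i) q ≤ r), w i →
          ∃ k : Fin ℓ, s k ≤ 2 * r ∧ ∃ x : X, dist x q ≤ r ∧ dist x (a (idx k)) ≤ s k := by
  obtain ⟨ℓ, hℓ, idx, s, hheavy, hcover⟩ := stmt10_general a w hw W hW hWpos α hα0
  exact ⟨ℓ, hℓ, idx, s, hheavy, fun q r _ => hcover q r⟩
end

section
/- Let δ ≥ 0 and α ∈ (0, 1), suppose dist(a_i, a_j) ≥ 1/2 for all i ≠ j, and let y be one of the points a_1, …, a_n such that ∑_{i=1}^n dist(y, a_i) ≤ n·(1/2 + δ). If s ≥ 0 is such that strictly fewer than αn of the points lie within distance strictly less than s of y, i.e. #{ i : dist(y, a_i) < s } < αn, then s ≤ 1/2 + (δ + 1/(2n))/(1 − α). In particular, the smallest radius K such that the closed ball of radius K around y contains at least αn of the points satisfies K ≤ 1/2 + (δ + 1/(2n))/(1 − α). -/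
/-!
All distances to `y` are at least `r = 1/2` except the one from `y` to itself, so after adding `r`
to that single distance the excesses `dist y (a i) - r` are nonnegative with sum at most `n δ + r`.
If `s > r` and fewer than `α n` points are at distance less than `s`, then more than `(1 - α) n`
excesses are at least `s - r`, and Markov's inequality gives `(1 - α) n (s - r) ≤ n δ + r`.

The minimal radius `K` is itself such an `s`: if the open ball of radius `K` contained `α n` points,
a slightly smaller closed ball would contain them too.
-/

open Finset

section Excess

variable {ι G : Type*} [Fintype ι] [AddCommGroup G] [LinearOrder G] [IsOrderedAddMonoid G]
  {d : ι → G} {i₀ : ι} {r : G}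

theorem card_filter_le_nsmul_sub_le_sum_sub_add (hr : 0 ≤ r) (h₀ : 0 ≤ d i₀)
    (hd : ∀ i, i ≠ i₀ → r ≤ d i) (t : G) :
    #{i | t ≤ d i} • (t - r) ≤ ∑ i, (d i - r) + r := by
  classical
  let e : ι → G := fun i ↦ d i - r + if i = i₀ then r else 0
  have he_nonneg (i : ι) : 0 ≤ e i := by
    by_cases hi : i = i₀
    · simpa [e, hi] using h₀
    · simpa [e, hi] using hd i hi
  have hsub_le (i : ι) : d i - r ≤ e i :=
    le_add_of_nonneg_right (by split_ifs <;> simp [hr])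
  calc #{i | t ≤ d i} • (t - r)
      ≤ ∑ i with t ≤ d i, e i := card_nsmul_le_sum _ _ _ fun i hi ↦
        (sub_le_sub_right (mem_filter.1 hi).2 r).trans (hsub_le i)
    _ ≤ ∑ i, e i := sum_le_univ_sum_of_nonneg he_nonneg
    _ = ∑ i, (d i - r) + r := by simp [e, sum_add_distrib]

end Excess

section AverageBound

variable {ι 𝕜 : Type*} [Fintype ι] [Field 𝕜] [LinearOrder 𝕜] [IsStrictOrderedRing 𝕜]
  {d : ι → 𝕜} {i₀ : ι} {r δ : 𝕜}

theorem card_filter_le_mul_sub_le_of_sum_le (hr : 0 ≤ r) (h₀ : 0 ≤ d i₀)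
    (hd : ∀ i, i ≠ i₀ → r ≤ d i) (hsum : ∑ i, d i ≤ Fintype.card ι * (r + δ)) (t : 𝕜) :
    #{i | t ≤ d i} * (t - r) ≤ Fintype.card ι * (δ + r / Fintype.card ι) := by
  have : Nonempty ι := ⟨i₀⟩
  have hn : (Fintype.card ι : 𝕜) ≠ 0 := Nat.cast_ne_zero.2 Fintype.card_ne_zero
  calc #{i | t ≤ d i} * (t - r)
      ≤ ∑ i, (d i - r) + r := by
        simpa only [nsmul_eq_mul] using card_filter_le_nsmul_sub_le_sum_sub_add hr h₀ hd t
    _ = ∑ i, d i - Fintype.card ι * r + r := by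
        simp only [sum_sub_distrib, sum_const, card_univ, nsmul_eq_mul]
    _ ≤ Fintype.card ι * (r + δ) - Fintype.card ι * r + r := by gcongr
    _ = Fintype.card ι * (δ + r / Fintype.card ι) := by field_simp; ring

theorem add_div_card_nonneg_of_sum_le (hr : 0 ≤ r) (h₀ : 0 ≤ d i₀)
    (hd : ∀ i, i ≠ i₀ → r ≤ d i) (hsum : ∑ i, d i ≤ Fintype.card ι * (r + δ)) :
    0 ≤ δ + r / Fintype.card ι := by
  have hn : (0 : 𝕜) < Fintype.card ι := Nat.cast_pos.2 (Fintype.card_pos_iff.2 ⟨i₀⟩)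
  have h := card_filter_le_mul_sub_le_of_sum_le hr h₀ hd hsum r
  rw [sub_self, mul_zero] at h
  exact nonneg_of_mul_nonneg_right h hn

theorem le_add_div_of_card_filter_lt (hr : 0 ≤ r) (h₀ : 0 ≤ d i₀)
    (hd : ∀ i, i ≠ i₀ → r ≤ d i) (hsum : ∑ i, d i ≤ Fintype.card ι * (r + δ)) {α t : 𝕜}
    (hα : α < 1) (ht : (#{i | d i < t} : 𝕜) < α * Fintype.card ι) :
    t ≤ r + (δ + r / Fintype.card ι) / (1 - α) := by
  have hn : (0 : 𝕜) < Fintype.card ι := Nat.cast_pos.2 (Fintype.card_pos_iff.2 ⟨i₀⟩)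
  have hα' : 0 < 1 - α := sub_pos.2 hα
  rw [← sub_le_iff_le_add', le_div_iff₀ hα']
  rcases le_or_gt t r with htr | hrt
  · exact (mul_nonpos_of_nonpos_of_nonneg (sub_nonpos.2 htr) hα'.le).trans
      (add_div_card_nonneg_of_sum_le hr h₀ hd hsum)
  have hfar : Fintype.card ι * (1 - α) ≤ (#{i | t ≤ d i} : 𝕜) := by
    have hsplit : (#{i | d i < t} + #{i | t ≤ d i} : 𝕜) = Fintype.card ι := by
      simpa only [not_lt, Nat.cast_add, card_univ] using
        congrArg (Nat.cast (R := 𝕜)) (card_filter_add_card_filter_not (s := univ) (d · < t))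
    linarith
  refine le_of_mul_le_mul_left ?_ hn
  calc Fintype.card ι * ((t - r) * (1 - α)) = Fintype.card ι * (1 - α) * (t - r) := by ring
    _ ≤ #{i | t ≤ d i} * (t - r) := mul_le_mul_of_nonneg_right hfar (sub_nonneg.2 hrt.le)
    _ ≤ Fintype.card ι * (δ + r / Fintype.card ι) :=
      card_filter_le_mul_sub_le_of_sum_le hr h₀ hd hsum t

end AverageBound

theorem card_filter_lt_lt_of_isLeast {ι β R : Type*} [LinearOrder β] [Semiring R] [LinearOrder R]
    [IsOrderedRing R] {s : Finset ι} {d : ι → β} {b K : β} {m : R}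
    (hK : IsLeast {t | b ≤ t ∧ m ≤ #{i ∈ s | d i ≤ t}} K) (hbK : b < K) :
    (#{i ∈ s | d i < K} : R) < m := by
  by_contra! hm
  let T : Finset β := insert b (image d {i ∈ s | d i < K})
  have hT : T.Nonempty := insert_nonempty _ _
  have hTK : T.max' hT < K := (max'_lt_iff T hT).2 (by grind)
  have hball : {i ∈ s | d i < K} ⊆ {i ∈ s | d i ≤ T.max' hT} := fun i hi ↦
    mem_filter.2 ⟨(mem_filter.1 hi).1, le_max' T _ (mem_insert_of_mem (mem_image_of_mem d hi))⟩
  have hcard : m ≤ #{i ∈ s | d i ≤ T.max' hT} := hm.trans (Nat.mono_cast (card_le_card hball))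
  exact hTK.not_ge (hK.2 ⟨le_max' T b (mem_insert_self _ _), hcard⟩)

theorem stmt12_general {X ι : Type*} [PseudoMetricSpace X] [Fintype ι] {a : ι → X} {y : X} {i₀ : ι}
    {r δ α : ℝ} (hr : 0 ≤ r) (hα : α < 1) (hsep : ∀ i, i ≠ i₀ → r ≤ dist y (a i))
    (hsum : ∑ i, dist y (a i) ≤ Fintype.card ι * (r + δ)) :
    (∀ s : ℝ, (#{i | dist y (a i) < s} : ℝ) < α * Fintype.card ι →
      s ≤ r + (δ + r / Fintype.card ι) / (1 - α)) ∧
    (∀ K : ℝ, IsLeast {K : ℝ | 0 ≤ K ∧ α * Fintype.card ι ≤ #{i | dist y (a i) ≤ K}} K →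
      K ≤ r + (δ + r / Fintype.card ι) / (1 - α)) := by
  have hopen (s : ℝ) (hs : (#{i | dist y (a i) < s} : ℝ) < α * Fintype.card ι) :
      s ≤ r + (δ + r / Fintype.card ι) / (1 - α) :=
    le_add_div_of_card_filter_lt (d := fun i ↦ dist y (a i)) hr dist_nonneg hsep hsum hα hs
  refine ⟨hopen, fun K hK ↦ ?_⟩
  rcases le_or_gt K 0 with hK₀ | hK₀
  · have hδ : 0 ≤ δ + r / Fintype.card ι :=
      add_div_card_nonneg_of_sum_le (d := fun i ↦ dist y (a i)) hr dist_nonneg hsep hsum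
    exact hK₀.trans (add_nonneg hr (div_nonneg hδ (sub_nonneg.2 hα.le)))
  · exact hopen K (card_filter_lt_lt_of_isLeast hK hK₀)

theorem stmt12 {X : Type*} [MetricSpace X] {n : ℕ} (hn : 0 < n)
    (a : Fin n → X)
    (δ : ℝ) (hδ : 0 ≤ δ)
    (α : ℝ) (hα0 : 0 < α) (hα1 : α < 1)
    (hsep : ∀ i j : Fin n, i ≠ j → 1 / 2 ≤ dist (a i) (a j))
    (y : X) (hy : ∃ i : Fin n, y = a i)
    (hsum : ∑ i, dist y (a i) ≤ (n : ℝ) * (1 / 2 + δ)) :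
    (∀ s : ℝ, 0 ≤ s →
      ((Finset.univ.filter (fun i => dist y (a i) < s)).card : ℝ) < α * n →
      s ≤ 1 / 2 + (δ + 1 / (2 * n)) / (1 - α)) ∧
    (∀ K : ℝ, IsLeast {K : ℝ | 0 ≤ K ∧
        α * n ≤ ((Finset.univ.filter (fun i => dist y (a i) ≤ K)).card : ℝ)} K →
      K ≤ 1 / 2 + (δ + 1 / (2 * n)) / (1 - α)) := by
  obtain ⟨i₀, rfl⟩ := hy
  obtain ⟨hopen, hclosed⟩ := stmt12_general one_half_pos.le hα1
    (fun i hi ↦ hsep i₀ i hi.symm) (by simpa only [Fintype.card_fin] using hsum)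
  simp only [Fintype.card_fin, div_div] at hopen hclosed
  exact ⟨fun s _ ↦ hopen s, hclosed⟩
end

section
/- For each positive integer k, let S_k be the set of all k × k real matrices with every entry equal to 1 or −1, excluding the matrix all of whose entries are −1, so that |S_k| = 2^{k²} − 1. Then: (a) for every entry position (i, j), strictly more than half of the matrices in S_k have (i, j)-entry equal to 1, so the entrywise median of S_k is the all-ones matrix J_k; (b) the ℓ2 operator norm of J_k equals k = (k²)^{1/2}; and (c) the fraction #{ M ∈ S_k : ‖M‖ > (k²)^{1/3} } / |S_k|, where ‖·‖ denotes the ℓ2 operator norm on k × k real matrices, tends to 0 as k → ∞. Hence, for d = k² and n = 2^d − 1, among these n matrices n − o(n) lie in the operator-norm ball of radius d^{1/3} around the zero matrix, while the entrywise median has operator norm d^{1/2}. -/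
/-!
Negation exchanges the sign matrices with `(i, j)`-entry `1` and those with `(i, j)`-entry `-1`, and
only the second class loses a member when the all `-1` matrix is removed. The all-ones matrix is the
rank-one matrix of the all-ones vector with itself.

For the limit, fix a maximal `1`-separated subset of the ball of radius `2` in `ℝᵏ`; comparing
volumes, it has at most `5 ^ k` points. It is a `1`-cover of that ball, so `‖M‖` is at most
the maximum of `⟪M x, y⟫` over the points `x, y` of the cover. By Hoeffding's inequality, each of
these at most `25 ^ k` forms exceeds `t` for a proportion at most `exp (-t ^ 2 / 32)` of the sign
matrices. Hence `25 ^ k * exp (-t ^ 2 / 32)` bounds the proportion of sign matrices with `‖M‖ > t`,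
and it tends to zero as soon as `t` grows faster than `√k`, as `k ^ (2 / 3)` does.
-/

open Finset

/-- The ℓ2 operator norm of a `k × k` real matrix, i.e. the operator norm of the
induced linear map on Euclidean space `ℝ^k`. -/
noncomputable def matOpNorm (k : ℕ) (M : Matrix (Fin k) (Fin k) ℝ) : ℝ :=
  ‖LinearMap.toContinuousLinearMap (Matrix.toEuclideanLin M)‖

/-- The set of `k × k` matrices with all entries `±1`, excluding the all `-1` matrix. -/
def Sk (k : ℕ) : Set (Matrix (Fin k) (Fin k) ℝ) :=
  {M | (∀ i j, M i j = 1 ∨ M i j = -1) ∧ ¬(∀ i j, M i j = -1)}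

open Real Metric Filter
open scoped NNReal ENNReal Topology Matrix.Norms.L2Operator RealInnerProductSpace

section Covers

variable {E F : Type*} [NormedAddCommGroup E] [NormedAddCommGroup F]

lemma packingNumber_one_closedBall_two_le [NormedSpace ℝ E] [FiniteDimensional ℝ E] :
    packingNumber 1 (closedBall (0 : E) 2) ≤ (5 ^ Module.finrank ℝ E : ℕ) := by
  refine iSup_le fun C => iSup₂_le fun hC hsep => ?_
  by_contra! hcard
  obtain ⟨s, hsC, hs⟩ := Set.exists_subset_encard_eq (Order.add_one_le_of_lt hcard)
  have hs_fin : s.Finite := Set.finite_of_encard_eq_coe (by exact_mod_cast hs)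
  have hle : #hs_fin.toFinset ≤ 5 ^ Module.finrank ℝ E := by
    refine Besicovitch.card_le_of_separated _ (fun c hc => ?_) fun c hc d hd hcd => ?_
    · simpa using hC (hsC (hs_fin.mem_toFinset.1 hc))
    · have hdist : 1 < edist c d :=
        hsep (hsC (hs_fin.mem_toFinset.1 hc)) (hsC (hs_fin.mem_toFinset.1 hd)) hcd
      rw [edist_dist, ENNReal.one_lt_ofReal, dist_eq_norm] at hdist
      exact hdist.le
  rw [hs_fin.encard_eq_coe_toFinset_card] at hs
  norm_cast at hs
  omega

lemma exists_finset_isCover_one_closedBall_two (E : Type*) [NormedAddCommGroup E]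
    [NormedSpace ℝ E] [FiniteDimensional ℝ E] :
    ∃ N : Finset E, (∀ x ∈ N, ‖x‖ ≤ 2) ∧ IsCover 1 (closedBall (0 : E) 2) (N : Set E) ∧
      #N ≤ 5 ^ Module.finrank ℝ E := by
  have hle := packingNumber_one_closedBall_two_le (E := E)
  have htop : packingNumber 1 (closedBall (0 : E) 2) ≠ ⊤ := ne_top_of_le_ne_top (by simp) hle
  rw [← encard_maximalSeparatedSet htop] at hle
  have hfin : (maximalSeparatedSet 1 (closedBall (0 : E) 2)).Finite :=
    Set.finite_of_encard_le_coe hle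
  refine ⟨hfin.toFinset, fun x hx => ?_, ?_, ?_⟩
  · simpa using maximalSeparatedSet_subset (hfin.mem_toFinset.1 hx)
  · rw [hfin.coe_toFinset]
    exact isCover_maximalSeparatedSet htop
  · rw [hfin.encard_eq_coe_toFinset_card] at hle
    exact_mod_cast hle

lemma exists_norm_sub_le_of_isCover {ε : ℝ≥0} {R : ℝ} {N : Set E}
    (hN : IsCover ε (closedBall 0 R) N) {x : E} (hx : ‖x‖ ≤ R) : ∃ y ∈ N, ‖x - y‖ ≤ ε := by
  obtain ⟨y, hy, hxy⟩ := hN (mem_closedBall_zero_iff.2 hx)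
  exact ⟨y, hy, dist_eq_norm x y ▸ dist_le_coe.2 (edist_le_coe.1 hxy)⟩

lemma mul_opNorm_le_of_isCover [NormedSpace ℝ E] [NormedSpace ℝ F] (A : E →L[ℝ] F) {ε : ℝ≥0}
    {R s : ℝ} (hR : 0 < R) {N : Set E} (hN : IsCover ε (closedBall 0 R) N)
    (hs : ∀ x ∈ N, ‖A x‖ ≤ s) : (R - ε) * ‖A‖ ≤ s := by
  have hball : ∀ x : E, ‖x‖ ≤ R → ‖A x‖ ≤ s + ε * ‖A‖ := fun x hx => by
    obtain ⟨y, hy, hxy⟩ := exists_norm_sub_le_of_isCover hN hx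
    calc ‖A x‖ = ‖A y + A (x - y)‖ := by rw [← map_add, add_sub_cancel]
      _ ≤ s + ‖A‖ * ε := norm_add_le_of_le (hs y hy) (A.le_opNorm_of_le hxy)
      _ = s + ε * ‖A‖ := by rw [mul_comm]
  have h0 : 0 ≤ s + ε * ‖A‖ := by simpa using hball 0 (by simpa using hR.le)
  have hnorm : ‖A‖ ≤ (s + ε * ‖A‖) / R := by
    refine A.opNorm_le_of_unit_norm (by positivity) fun x hx => ?_
    rw [le_div_iff₀' hR]
    simpa [norm_smul, hx, abs_of_pos hR] using hball (R • x)
  rw [le_div_iff₀ hR] at hnorm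
  linarith

lemma mul_norm_le_of_isCover [InnerProductSpace ℝ F] (z : F) {ε : ℝ≥0} {R s : ℝ} (hR : 0 ≤ R)
    {N : Set F} (hN : IsCover ε (closedBall 0 R) N) (hs : ∀ y ∈ N, ⟪z, y⟫ ≤ s) :
    (R - ε) * ‖z‖ ≤ s := by
  -- If `z = 0`, then `‖z‖⁻¹ = 0` and `x = 0`, which still serves.
  let x : F := (R * ‖z‖⁻¹) • z
  have hx : ‖x‖ ≤ R := by
    rw [norm_smul, norm_mul, norm_inv, norm_norm, norm_of_nonneg hR, mul_assoc]
    exact mul_le_of_le_one_right hR inv_mul_le_one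
  have hzx : ⟪z, x⟫ = R * ‖z‖ := by
    rw [real_inner_smul_right, real_inner_self_eq_norm_mul_norm, mul_assoc, ← mul_assoc ‖z‖⁻¹,
      inv_mul_mul_self]
  obtain ⟨y, hy, hxy⟩ := exists_norm_sub_le_of_isCover hN hx
  have hclose : ⟪z, x - y⟫ ≤ ‖z‖ * ε :=
    (real_inner_le_norm _ _).trans (mul_le_mul_of_nonneg_left hxy (norm_nonneg z))
  rw [inner_sub_right, hzx] at hclose
  linarith [hs y hy]

lemma opNorm_le_of_isCover_one_closedBall_two [NormedSpace ℝ E] [InnerProductSpace ℝ F]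
    (A : E →L[ℝ] F) {s : ℝ} {N : Set E} {N' : Set F} (hN : IsCover 1 (closedBall 0 2) N)
    (hN' : IsCover 1 (closedBall 0 2) N') (hs : ∀ x ∈ N, ∀ y ∈ N', ⟪A x, y⟫ ≤ s) : ‖A‖ ≤ s := by
  have h : ∀ x ∈ N, ‖A x‖ ≤ s := fun x hx => by
    simpa [show (2 : ℝ) - 1 = 1 by norm_num] using
      mul_norm_le_of_isCover (A x) zero_le_two hN' (hs x hx)
  simpa [show (2 : ℝ) - 1 = 1 by norm_num] using mul_opNorm_le_of_isCover A two_pos hN h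

end Covers

section RankOne

variable {𝕜 m n : Type*} [RCLike 𝕜] [Fintype m] [Fintype n] [DecidableEq n]

lemma l2_opNorm_vecMulVec (x : EuclideanSpace 𝕜 m) (y : EuclideanSpace 𝕜 n) :
    ‖Matrix.vecMulVec x (star y)‖ = ‖x‖ * ‖y‖ := by
  rw [← InnerProductSpace.symm_toEuclideanLin_rankOne, Matrix.l2_opNorm_def,
    ← InnerProductSpace.norm_rankOne (𝕜 := 𝕜) x y, LinearEquiv.trans_apply,
    LinearEquiv.apply_symm_apply]
  rfl

lemma l2_opNorm_of_const_one :
    ‖(Matrix.of fun _ _ => 1 : Matrix m n 𝕜)‖ = √(Fintype.card m) * √(Fintype.card n) := by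
  have h : (Matrix.of fun _ _ => 1 : Matrix m n 𝕜) =
      Matrix.vecMulVec (WithLp.toLp 2 1 : EuclideanSpace 𝕜 m)
        (star (WithLp.toLp 2 1 : EuclideanSpace 𝕜 n)) := by
    ext i j
    simp [Matrix.vecMulVec_apply]
  rw [h, l2_opNorm_vecMulVec]
  simp [EuclideanSpace.norm_eq]

end RankOne

section BilinearForm

variable {m n : Type*} [Fintype m] [Fintype n]

lemma inner_toEuclideanLin_eq_sum [DecidableEq n] (M : Matrix m n ℝ)
    (x : EuclideanSpace ℝ n) (y : EuclideanSpace ℝ m) :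
    ⟪Matrix.toEuclideanLin M x, y⟫ = ∑ i, ∑ j, M i j * Matrix.vecMulVec y x i j := by
  simp [PiLp.inner_apply, Matrix.toLpLin_apply, Matrix.mulVec, dotProduct, mul_sum,
    Matrix.vecMulVec_apply, mul_left_comm]

lemma sum_sq_vecMulVec (x : EuclideanSpace ℝ n) (y : EuclideanSpace ℝ m) :
    ∑ i, ∑ j, Matrix.vecMulVec y x i j ^ 2 = (‖y‖ * ‖x‖) ^ 2 := by
  simp only [mul_pow, EuclideanSpace.real_norm_sq_eq, sum_mul_sum, Matrix.vecMulVec_apply]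

end BilinearForm

section SignMatrices

variable (m n : Type*) [Fintype m] [Fintype n] [DecidableEq m] [DecidableEq n]

/-- The set of all real matrices with entries `±1`, including the all `-1` matrix that is excluded
from `Sk`: its entries are independent, and it is stable under negation. -/
noncomputable def signMatrices : Finset (Matrix m n ℝ) :=
  Fintype.piFinset fun _ => Fintype.piFinset fun _ => {1, -1}

variable {m n}

lemma mem_signMatrices {M : Matrix m n ℝ} :
    M ∈ signMatrices m n ↔ ∀ i j, M i j = 1 ∨ M i j = -1 := by
  refine Fintype.mem_piFinset.trans (forall_congr' fun i => ?_)
  refine Fintype.mem_piFinset.trans (forall_congr' fun j => ?_)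
  rw [mem_insert, mem_singleton]

lemma card_signMatrices :
    #(signMatrices m n) = 2 ^ (Fintype.card m * Fintype.card n) := by
  have hpair : #({1, -1} : Finset ℝ) = 2 := card_pair (by norm_num)
  refine (Fintype.card_piFinset _).trans ?_
  simp only [Fintype.card_piFinset, hpair, prod_const, card_univ]
  rw [← pow_mul, mul_comm]

lemma neg_mem_signMatrices {M : Matrix m n ℝ} : -M ∈ signMatrices m n ↔ M ∈ signMatrices m n := by
  simp only [mem_signMatrices]
  refine forall₂_congr fun i j => ?_
  rw [Matrix.neg_apply, neg_inj, neg_eq_iff_eq_neg, or_comm]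

lemma two_mul_card_filter_signMatrices (i : m) (j : n) :
    2 * #{M ∈ signMatrices m n | M i j = 1} = #(signMatrices m n) := by
  have hneg : #{M ∈ signMatrices m n | M i j = 1} = #{M ∈ signMatrices m n | ¬ M i j = 1} := by
    refine card_equiv (Equiv.neg _) fun M => ?_
    simp only [mem_filter, Equiv.neg_apply, neg_mem_signMatrices, Matrix.neg_apply]
    refine and_congr_right fun hM => ?_
    rcases mem_signMatrices.1 hM i j with h | h <;> rw [h] <;> norm_num
  rw [← card_filter_add_card_filter_not (s := signMatrices m n) (fun M => M i j = 1), ← hneg,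
    two_mul]

lemma sum_exp_signMatrices (a : Matrix m n ℝ) :
    ∑ M ∈ signMatrices m n, exp (∑ i, ∑ j, M i j * a i j) = ∏ i, ∏ j, 2 * cosh (a i j) := by
  have hentry (x : ℝ) : 2 * cosh x = ∑ e ∈ ({1, -1} : Finset ℝ), exp (e * x) := by
    rw [sum_pair (by norm_num), one_mul, neg_one_mul, cosh_eq, mul_div_cancel₀ _ two_ne_zero]
  simp only [hentry, prod_univ_sum, exp_sum]
  rfl

lemma sum_exp_signMatrices_le (a : Matrix m n ℝ) :
    ∑ M ∈ signMatrices m n, exp (∑ i, ∑ j, M i j * a i j) ≤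
      #(signMatrices m n) * exp ((∑ i, ∑ j, a i j ^ 2) / 2) := by
  calc ∑ M ∈ signMatrices m n, exp (∑ i, ∑ j, M i j * a i j)
      = ∏ i, ∏ j, 2 * cosh (a i j) := sum_exp_signMatrices a
    _ ≤ ∏ i, ∏ j, 2 * exp (a i j ^ 2 / 2) := by
        gcongr
        exact cosh_le_exp_half_sq _
    _ = #(signMatrices m n) * exp ((∑ i, ∑ j, a i j ^ 2) / 2) := by
        simp only [card_signMatrices, prod_mul_distrib, prod_const, card_univ, ← exp_sum,
          ← sum_div, ← pow_mul]
        rw [mul_comm (Fintype.card n)]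
        norm_cast

lemma card_filter_le_sum_signMatrices_le (a : Matrix m n ℝ) {t v : ℝ} (ht : 0 ≤ t)
    (hv : 0 < v) (ha : ∑ i, ∑ j, a i j ^ 2 ≤ v) :
    (#{M ∈ signMatrices m n | t ≤ ∑ i, ∑ j, M i j * a i j} : ℝ) ≤
      #(signMatrices m n) * exp (-t ^ 2 / (2 * v)) := by
  -- The minimizer of `l ^ 2 * v / 2 - l * t`.
  let l := t / v
  have hl : 0 ≤ l := by positivity
  have hmarkov : #{M ∈ signMatrices m n | t ≤ ∑ i, ∑ j, M i j * a i j} * exp (l * t) ≤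
      ∑ M ∈ signMatrices m n, exp (∑ i, ∑ j, M i j * (l • a) i j) := by
    rw [← nsmul_eq_mul, ← sum_const]
    refine (sum_le_sum fun M hM => exp_le_exp.2 ?_).trans
      (sum_le_sum_of_subset_of_nonneg (filter_subset _ _) fun M _ _ => (exp_pos _).le)
    calc l * t ≤ l * ∑ i, ∑ j, M i j * a i j := by gcongr; exact (mem_filter.1 hM).2
      _ = ∑ i, ∑ j, M i j * (l • a) i j := by
        simp only [mul_sum, Matrix.smul_apply, smul_eq_mul, mul_left_comm]
  have hmoment : ∑ i, ∑ j, (l • a) i j ^ 2 ≤ l ^ 2 * v := by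
    simp only [Matrix.smul_apply, smul_eq_mul, mul_pow, ← mul_sum]
    gcongr
  rw [← le_div_iff₀ (exp_pos _)] at hmarkov
  calc (#{M ∈ signMatrices m n | t ≤ ∑ i, ∑ j, M i j * a i j} : ℝ)
      ≤ #(signMatrices m n) * exp (l ^ 2 * v / 2) / exp (l * t) :=
        hmarkov.trans <| by
          gcongr
          exact (sum_exp_signMatrices_le _).trans (by gcongr)
    _ = #(signMatrices m n) * exp (-t ^ 2 / (2 * v)) := by
        rw [mul_div_assoc, ← exp_sub]
        congr 2
        simp only [l]
        field_simp
        ring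

lemma card_filter_le_inner_signMatrices_le {t : ℝ} (ht : 0 ≤ t) {x : EuclideanSpace ℝ n}
    {y : EuclideanSpace ℝ m} (hx : ‖x‖ ≤ 2) (hy : ‖y‖ ≤ 2) :
    (#{M ∈ signMatrices m n | t ≤ ⟪Matrix.toEuclideanLin M x, y⟫} : ℝ) ≤
      #(signMatrices m n) * exp (-t ^ 2 / 32) := by
  have hv : ∑ i, ∑ j, Matrix.vecMulVec y x i j ^ 2 ≤ 16 := by
    calc _ = (‖y‖ * ‖x‖) ^ 2 := sum_sq_vecMulVec x y
      _ ≤ (2 * 2) ^ 2 := by gcongr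
      _ = 16 := by norm_num
  simp only [inner_toEuclideanLin_eq_sum]
  convert card_filter_le_sum_signMatrices_le _ ht (by norm_num) hv using 4
  norm_num

lemma card_filter_lt_l2_opNorm_signMatrices_le {t : ℝ} (ht : 0 ≤ t) :
    (#{M ∈ signMatrices m n | t < ‖M‖} : ℝ) ≤
      #(signMatrices m n) * (5 ^ (Fintype.card m + Fintype.card n) * exp (-t ^ 2 / 32)) := by
  obtain ⟨N, hN2, hN, hNcard⟩ := exists_finset_isCover_one_closedBall_two (EuclideanSpace ℝ n)
  obtain ⟨N', hN2', hN', hNcard'⟩ := exists_finset_isCover_one_closedBall_two (EuclideanSpace ℝ m)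
  rw [finrank_euclideanSpace] at hNcard hNcard'
  have hunion : {M ∈ signMatrices m n | t < ‖M‖} ⊆ (N' ×ˢ N).biUnion fun p =>
      {M ∈ signMatrices m n | t ≤ ⟪Matrix.toEuclideanLin M p.2, p.1⟫} := by
    intro M hM
    obtain ⟨hM, htM⟩ := mem_filter.1 hM
    obtain ⟨x, hx, y, hy, hxy⟩ :
        ∃ x ∈ N, ∃ y ∈ N', t < ⟪Matrix.toEuclideanLin M x, y⟫ := by
      contrapose! htM
      exact opNorm_le_of_isCover_one_closedBall_two
        (LinearMap.toContinuousLinearMap (Matrix.toEuclideanLin M)) hN hN' htM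
    exact mem_biUnion.2 ⟨(y, x), mem_product.2 ⟨hy, hx⟩, mem_filter.2 ⟨hM, hxy.le⟩⟩
  calc (#{M ∈ signMatrices m n | t < ‖M‖} : ℝ)
      ≤ ∑ p ∈ N' ×ˢ N, (#{M ∈ signMatrices m n |
          t ≤ ⟪Matrix.toEuclideanLin M p.2, p.1⟫} : ℝ) :=
        mod_cast (card_le_card hunion).trans card_biUnion_le
    _ ≤ ∑ _p ∈ N' ×ˢ N, #(signMatrices m n) * exp (-t ^ 2 / 32) := by
        refine sum_le_sum fun p hp => ?_
        obtain ⟨hy, hx⟩ := mem_product.1 hp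
        exact card_filter_le_inner_signMatrices_le ht (hN2 _ hx) (hN2' _ hy)
    _ = #(signMatrices m n) * ((#N' * #N : ℕ) * exp (-t ^ 2 / 32)) := by
        rw [sum_const, card_product, nsmul_eq_mul, mul_left_comm]
    _ ≤ #(signMatrices m n) * (5 ^ (Fintype.card m + Fintype.card n) * exp (-t ^ 2 / 32)) := by
        gcongr
        rw [pow_add]
        exact_mod_cast Nat.mul_le_mul hNcard' hNcard

end SignMatrices

section Limit

lemma tendsto_pow_mul_exp_neg_sq {b c : ℝ} (hb : 0 < b) (hc : 0 < c) {t : ℕ → ℝ}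
    (ht : Tendsto (fun k => t k / √k) atTop atTop) :
    Tendsto (fun k => b ^ k * exp (-t k ^ 2 / c)) atTop (𝓝 0) := by
  have hexp : (fun k : ℕ => exp (k * (log b - (t k / √k) ^ 2 / c))) =ᶠ[atTop]
      fun k => b ^ k * exp (-t k ^ 2 / c) := by
    filter_upwards [eventually_gt_atTop 0] with k hk
    have hk' : (0 : ℝ) < k := Nat.cast_pos.2 hk
    rw [← exp_log (pow_pos hb k), log_pow, ← exp_add, div_pow, sq_sqrt hk'.le]
    congr 1
    field_simp
    ring
  refine (tendsto_exp_atBot.comp ?_).congr' hexp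
  refine tendsto_natCast_atTop_atTop.atTop_mul_atBot₀ ?_
  exact tendsto_atBot_add_const_left _ _
    (tendsto_neg_atTop_atBot.comp (((tendsto_pow_atTop two_ne_zero).comp ht).atTop_div_const hc))

lemma tendsto_card_filter_lt_l2_opNorm_signMatrices_div {t : ℕ → ℝ}
    (ht : Tendsto (fun k => t k / √k) atTop atTop) :
    Tendsto (fun k : ℕ => (#{M ∈ signMatrices (Fin k) (Fin k) | t k < ‖M‖} : ℝ) /
      #(signMatrices (Fin k) (Fin k))) atTop (𝓝 0) := by
  refine squeeze_zero' (.of_forall fun k => by positivity) ?_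
    (tendsto_pow_mul_exp_neg_sq (b := 25) (c := 32) (by norm_num) (by norm_num) ht)
  filter_upwards [ht.eventually_gt_atTop 0] with k hk
  have htk : 0 ≤ t k := by
    contrapose! hk
    exact div_nonpos_of_nonpos_of_nonneg hk.le (sqrt_nonneg _)
  have h := card_filter_lt_l2_opNorm_signMatrices_le (m := Fin k) (n := Fin k) htk
  rw [Fintype.card_fin, ← two_mul, pow_mul, show (5 : ℝ) ^ 2 = 25 by norm_num] at h
  exact div_le_of_le_mul₀ (by positivity) (by positivity) (h.trans_eq (mul_comm _ _))

lemma tendsto_sq_rpow_one_third_div_sqrt :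
    Tendsto (fun k : ℕ => ((k : ℝ) ^ 2) ^ ((1 : ℝ) / 3) / √k) atTop atTop := by
  have hpow : (fun k : ℕ => (k : ℝ) ^ ((1 : ℝ) / 6)) =ᶠ[atTop]
      fun k => ((k : ℝ) ^ 2) ^ ((1 : ℝ) / 3) / √k := by
    filter_upwards [eventually_gt_atTop 0] with k hk
    rw [← rpow_natCast_mul k.cast_nonneg, sqrt_eq_rpow, ← rpow_sub (Nat.cast_pos.2 hk)]
    norm_num
  exact ((tendsto_rpow_atTop (by norm_num)).comp tendsto_natCast_atTop_atTop).congr' hpow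

end Limit

section Sk

variable {k : ℕ}

lemma matOpNorm_eq_l2_opNorm (M : Matrix (Fin k) (Fin k) ℝ) : matOpNorm k M = ‖M‖ := rfl

lemma Sk_eq_coe_erase :
    Sk k = ((signMatrices (Fin k) (Fin k)).erase (Matrix.of fun _ _ => -1) : Set _) := by
  ext M
  simp only [Sk, Set.mem_ofPred_eq, coe_erase, Set.mem_sdiff, mem_coe, mem_signMatrices,
    Set.mem_singleton_iff, ← Matrix.ext_iff, Matrix.of_apply]

lemma ncard_Sk : (Sk k).ncard = 2 ^ (k ^ 2) - 1 := by
  rw [Sk_eq_coe_erase, Set.ncard_coe_finset, card_erase_of_mem, card_signMatrices,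
    Fintype.card_fin, sq]
  exact mem_signMatrices.2 fun i j => Or.inr rfl

lemma ncard_Sk_lt_two_mul_ncard (i j : Fin k) :
    (Sk k).ncard < 2 * {M ∈ Sk k | M i j = 1}.ncard := by
  have hset : {M ∈ Sk k | M i j = 1} =
      ({M ∈ signMatrices (Fin k) (Fin k) | M i j = 1} : Finset _) := by
    ext M
    simp only [Sk, Set.mem_ofPred_eq, coe_filter, mem_signMatrices]
    refine and_congr_left fun hM => and_iff_left fun hneg => ?_
    norm_num [hneg i j] at hM
  rw [hset, Set.ncard_coe_finset, two_mul_card_filter_signMatrices, Sk_eq_coe_erase,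
    Set.ncard_coe_finset]
  exact card_erase_lt_of_mem (mem_signMatrices.2 fun i j => Or.inr rfl)

lemma ncard_sep_Sk_div_le (hk : 0 < k) (p : Matrix (Fin k) (Fin k) ℝ → Prop) [DecidablePred p] :
    ({M ∈ Sk k | p M}.ncard : ℝ) / (Sk k).ncard ≤
      2 * (#{M ∈ signMatrices (Fin k) (Fin k) | p M} / #(signMatrices (Fin k) (Fin k))) := by
  have hnum : {M ∈ Sk k | p M}.ncard ≤ #{M ∈ signMatrices (Fin k) (Fin k) | p M} := by
    rw [← Set.ncard_coe_finset]
    refine Set.ncard_le_ncard (fun M hM => ?_)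
    exact mem_coe.2 (mem_filter.2 ⟨mem_signMatrices.2 hM.1.1, hM.2⟩)
  have hden : #(signMatrices (Fin k) (Fin k)) ≤ 2 * (Sk k).ncard := by
    have htwo : 2 ≤ 2 ^ (k ^ 2) := Nat.le_self_pow (by positivity) 2
    rw [ncard_Sk, card_signMatrices, Fintype.card_fin, ← sq]
    omega
  have hpos : 0 < #(signMatrices (Fin k) (Fin k)) := by
    rw [card_signMatrices]
    positivity
  have hden' : (#(signMatrices (Fin k) (Fin k)) : ℝ) / 2 ≤ (Sk k).ncard := by
    rw [div_le_iff₀' two_pos]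
    exact_mod_cast hden
  calc ({M ∈ Sk k | p M}.ncard : ℝ) / (Sk k).ncard
      ≤ #{M ∈ signMatrices (Fin k) (Fin k) | p M} / (#(signMatrices (Fin k) (Fin k)) / 2) := by
        gcongr
    _ = 2 * (#{M ∈ signMatrices (Fin k) (Fin k) | p M} / #(signMatrices (Fin k) (Fin k))) := by
        rw [div_div_eq_mul_div, mul_comm, mul_div_assoc]

lemma tendsto_ncard_sep_Sk_lt_matOpNorm_div {t : ℕ → ℝ}
    (ht : Tendsto (fun k => t k / √k) atTop atTop) :
    Tendsto (fun k => ({M ∈ Sk k | t k < matOpNorm k M}.ncard : ℝ) / (Sk k).ncard)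
      atTop (𝓝 0) := by
  have hlim := (tendsto_card_filter_lt_l2_opNorm_signMatrices_div ht).const_mul 2
  rw [mul_zero] at hlim
  refine squeeze_zero' (.of_forall fun k => by positivity) ?_ hlim
  filter_upwards [eventually_gt_atTop 0] with k hk
  exact ncard_sep_Sk_div_le hk fun M => t k < ‖M‖

end Sk

theorem stmt13 :
    (∀ k : ℕ, 0 < k → (Sk k).ncard = 2 ^ (k ^ 2) - 1) ∧
    (∀ k : ℕ, 0 < k → ∀ i j : Fin k,
      (Sk k).ncard < 2 * {M ∈ Sk k | M i j = 1}.ncard) ∧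
    (∀ k : ℕ, 0 < k → matOpNorm k (Matrix.of fun _ _ => (1 : ℝ)) = (k : ℝ)) ∧
    (∀ k : ℕ, 0 < k → ((k : ℝ) ^ 2) ^ ((1 : ℝ) / 2) = (k : ℝ)) ∧
    Filter.Tendsto
      (fun k : ℕ =>
        ({M ∈ Sk k | ((k : ℝ) ^ 2) ^ ((1 : ℝ) / 3) < matOpNorm k M}.ncard : ℝ) /
          ((Sk k).ncard : ℝ))
      Filter.atTop (nhds 0) := by
  refine ⟨fun k _ => ncard_Sk, fun k _ => ncard_Sk_lt_two_mul_ncard, fun k _ => ?_, fun k _ => ?_,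
    tendsto_ncard_sep_Sk_lt_matOpNorm_div tendsto_sq_rpow_one_third_div_sqrt⟩
  · rw [matOpNorm_eq_l2_opNorm, l2_opNorm_of_const_one, Fintype.card_fin,
      Real.mul_self_sqrt k.cast_nonneg]
  · rw [← Real.sqrt_eq_rpow, Real.sqrt_sq k.cast_nonneg]
end
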